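/- arXiv:2511.07120 — 4 statements merged into one kernel-verified Lean document; each statement's English description precedes it below -/
import Mathlib

section
/- Uniform L¹ bound on the scale decomposition of a Green-type function: Let d be a positive integer and σ∈(0,d). Let G:ℝ^d∖{0}→ℝ be smooth and such that (i) for every multi-index a there is C_a with |∂^aG(x)| ≤ C_a|x|^{σ−d−|a|} for all x≠0, and (ii) for every multi-index a and every N∈ℕ there is C_{a,N} with |∂^aG(x)| ≤ C_{a,N}|x|^{−N} for all |x|≥1. Let χ∈C^∞(ℝ) satisfy χ(r)=0 for |r|≤1/4 and χ(r)=1 for |r|≥1/2, and for μ∈(0,1] set χ_μ(r):=χ(r(1−μ)/μ), G_μ(x):=χ_μ(|x|^σ)G(x) and Ġ_μ:=∂_μG_μ, a compactly supported smooth function on ℝ^d. Then for every l∈ℕ there exists a constant C such that ‖(1−[μ]²Δ)^{l(d+2)} Ġ_μ‖_{L¹(ℝ^d)} ≤ C for all μ∈(0,1], where [μ]:=μ^{1/σ} and Δ is the Laplacian on ℝ^d. -/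
/-!
The estimate is a scaling argument. For `μ < 1` put `ρ = (μ / (1 - μ)) ^ (1 / σ)`. Differentiating
in `μ` gives `Ġ_μ(x) = -μ⁻² ρ^σ φ(x / ρ) G(x)` with the fixed profile `φ(y) = |y|^σ χ'(|y|^σ)`
(`cutoff`), which is smooth and supported in a fixed annulus away from the origin. If the
derivatives of `G` satisfy `‖DⁿG(x)‖ ≲ |x|^(s-d-n)` with `s < d`, the Leibniz rule therefore gives
`‖DⁿĠ_μ‖ ≲ μ⁻² ρ^(σ+s-d-n)` on the ball of radius `ρ`, and `Ġ_μ` vanishes outside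
(`cutoff_mul_bound`). Because `[μ] ≤ ρ`, each factor `[μ]²Δ` costs only a constant
(`opIter_bound`), so integrating over the ball bounds the `L¹` norm by a constant times
`μ⁻² ρ^(σ+s)` (`scale_bound`).

The hypotheses on `G` give the derivative bounds both for `s = σ` and, thanks to the decay at
infinity, for `s = -σ`. The first choice yields `μ⁻² ρ^(2σ) = (1 - μ)⁻²`, bounded for `μ ≤ 1/2`;
the second yields `μ⁻²`, bounded for `μ ≥ 1/2`. At `μ = 1` the function `Ġ_μ` is zero.
-/

open MeasureTheory
open scoped ENNReal

noncomputable section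

/-- Points of `ℝ^d`. -/
abbrev Vd (d : ℕ) := Fin d → ℝ

/-- The Euclidean norm `|x|` on `ℝ^d`. -/
def euclNorm (d : ℕ) (z : Vd d) : ℝ := Real.sqrt (∑ i, (z i) ^ 2)

/-- The Laplacian `Δf = Σ_i ∂_i²f`. -/
def lap (d : ℕ) (f : Vd d → ℝ) : Vd d → ℝ := fun x =>
  ∑ i : Fin d, fderiv ℝ (fun y => fderiv ℝ f y (Pi.single i 1)) x (Pi.single i 1)

/-- The operator `(1 - t²Δ)`. -/
def opOnce (d : ℕ) (t : ℝ) (f : Vd d → ℝ) : Vd d → ℝ := fun x => f x - t ^ 2 * lap d f x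

/-- The operator `(1 - t²Δ)^n`. -/
def opIter (d : ℕ) (t : ℝ) (n : ℕ) (f : Vd d → ℝ) : Vd d → ℝ := (opOnce d t)^[n] f

/-! ### The Euclidean norm -/

lemma euclNorm_nonneg (d : ℕ) (z : Vd d) : 0 ≤ euclNorm d z := Real.sqrt_nonneg _

lemma euclNorm_sumSq_pos (d : ℕ) {z : Vd d} (hz : z ≠ 0) : 0 < ∑ i, (z i) ^ 2 := by
  obtain ⟨i, hi⟩ := Function.ne_iff.mp hz
  exact Finset.sum_pos' (fun j _ => sq_nonneg _) ⟨i, Finset.mem_univ _, by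
    have : z i ≠ 0 := hi
    positivity⟩

lemma euclNorm_pos (d : ℕ) {z : Vd d} (hz : z ≠ 0) : 0 < euclNorm d z :=
  Real.sqrt_pos.mpr (euclNorm_sumSq_pos d hz)

lemma euclNorm_zero (d : ℕ) : euclNorm d 0 = 0 := by simp [euclNorm]

lemma euclNorm_smul (d : ℕ) {a : ℝ} (ha : 0 ≤ a) (z : Vd d) :
    euclNorm d (a • z) = a * euclNorm d z := by
  simp only [euclNorm, Pi.smul_apply, smul_eq_mul, mul_pow, ← Finset.mul_sum]
  rw [Real.sqrt_mul (sq_nonneg a), Real.sqrt_sq ha]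

lemma norm_le_euclNorm (d : ℕ) (z : Vd d) : ‖z‖ ≤ euclNorm d z := by
  rw [pi_norm_le_iff_of_nonneg (euclNorm_nonneg d z)]
  intro i
  rw [Real.norm_eq_abs, ← Real.sqrt_sq_eq_abs]
  exact Real.sqrt_le_sqrt
    (Finset.single_le_sum (f := fun j => (z j) ^ 2) (fun j _ => sq_nonneg _) (Finset.mem_univ i))

lemma continuous_euclNorm (d : ℕ) : Continuous (euclNorm d) := by
  unfold euclNorm
  fun_prop

lemma contDiffAt_euclNorm (d : ℕ) {z : Vd d} (hz : z ≠ 0) :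
    ContDiffAt ℝ (⊤ : ℕ∞) (euclNorm d) z := by
  unfold euclNorm
  refine ContDiffAt.sqrt ?_ (euclNorm_sumSq_pos d hz).ne'
  fun_prop

/-! ### The cutoff profile -/

/-- The profile `φ(y) = |y|^σ χ'(|y|^σ)` of `Ġ_μ / G` at unit scale. -/
def cutoff (d : ℕ) (σ : ℝ) (χ : ℝ → ℝ) (y : Vd d) : ℝ :=
  (euclNorm d y) ^ σ * deriv χ ((euclNorm d y) ^ σ)

/-- The inner radius of an annulus of outer radius `1` that carries `cutoff`. -/
def innerRadius (σ : ℝ) : ℝ := (1 / 4 : ℝ) ^ (1 / σ)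

lemma innerRadius_pos (σ : ℝ) : 0 < innerRadius σ := by
  unfold innerRadius
  positivity

lemma cutoff_eq_zero (d : ℕ) {σ : ℝ} (hσ : 0 < σ) {χ : ℝ → ℝ}
    (hχ0 : ∀ r : ℝ, |r| ≤ 1 / 4 → χ r = 0) (hχ1 : ∀ r : ℝ, 1 / 2 ≤ |r| → χ r = 1) {y : Vd d}
    (hy : ¬ (innerRadius σ ≤ euclNorm d y ∧ euclNorm d y ≤ 1)) : cutoff d σ χ y = 0 := by
  have h0 := euclNorm_nonneg d y
  have hr0 : 0 ≤ euclNorm d y ^ σ := Real.rpow_nonneg h0 _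
  suffices h : deriv χ (euclNorm d y ^ σ) = 0 by simp [cutoff, h]
  by_cases h1 : euclNorm d y ≤ 1
  · have h2 : euclNorm d y < innerRadius σ := by
      by_contra h
      exact hy ⟨not_lt.mp h, h1⟩
    have h3 : euclNorm d y ^ σ < 1 / 4 := by
      have := Real.rpow_lt_rpow h0 h2 hσ
      rwa [innerRadius, ← Real.rpow_mul (by norm_num), one_div_mul_cancel hσ.ne',
        Real.rpow_one] at this
    have h4 : χ =ᶠ[nhds (euclNorm d y ^ σ)] fun _ => 0 := by
      filter_upwards [(isOpen_lt continuous_abs continuous_const).mem_nhds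
        (show |euclNorm d y ^ σ| < 1 / 4 by rwa [abs_of_nonneg hr0])] with r hr
      exact hχ0 r (le_of_lt hr)
    rw [h4.deriv_eq, deriv_const]
  · have h3 : 1 / 2 < euclNorm d y ^ σ := by
      have := Real.one_lt_rpow (not_le.mp h1) hσ
      linarith
    have h4 : χ =ᶠ[nhds (euclNorm d y ^ σ)] fun _ => 1 := by
      filter_upwards [(isOpen_lt continuous_const continuous_abs).mem_nhds
        (show 1 / 2 < |euclNorm d y ^ σ| by rwa [abs_of_nonneg hr0])] with r hr
      exact hχ1 r (le_of_lt hr)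
    rw [h4.deriv_eq, deriv_const]

lemma tsupport_cutoff_subset (d : ℕ) {σ : ℝ} (hσ : 0 < σ) {χ : ℝ → ℝ}
    (hχ0 : ∀ r : ℝ, |r| ≤ 1 / 4 → χ r = 0) (hχ1 : ∀ r : ℝ, 1 / 2 ≤ |r| → χ r = 1) :
    tsupport (cutoff d σ χ) ⊆ {y | innerRadius σ ≤ euclNorm d y ∧ euclNorm d y ≤ 1} := by
  refine closure_minimal ?_ ((isClosed_le continuous_const (continuous_euclNorm d)).inter
    (isClosed_le (continuous_euclNorm d) continuous_const))
  intro y hy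
  by_contra h
  exact hy (cutoff_eq_zero d hσ hχ0 hχ1 h)

lemma cutoff_eventually_zero (d : ℕ) {σ : ℝ} (hσ : 0 < σ) {χ : ℝ → ℝ}
    (hχ0 : ∀ r : ℝ, |r| ≤ 1 / 4 → χ r = 0) (hχ1 : ∀ r : ℝ, 1 / 2 ≤ |r| → χ r = 1) :
    cutoff d σ χ =ᶠ[nhds 0] fun _ => 0 := by
  filter_upwards [(isOpen_lt (continuous_euclNorm d) continuous_const).mem_nhds
    (show euclNorm d 0 < innerRadius σ by rw [euclNorm_zero]; exact innerRadius_pos σ)] with y hy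
  exact cutoff_eq_zero d hσ hχ0 hχ1 (fun h => absurd h.1 (not_le.mpr hy))

lemma contDiff_cutoff (d : ℕ) {σ : ℝ} (hσ : 0 < σ) {χ : ℝ → ℝ} (hχ : ContDiff ℝ (⊤ : ℕ∞) χ)
    (hχ0 : ∀ r : ℝ, |r| ≤ 1 / 4 → χ r = 0) (hχ1 : ∀ r : ℝ, 1 / 2 ≤ |r| → χ r = 1) :
    ContDiff ℝ (⊤ : ℕ∞) (cutoff d σ χ) := by
  rw [contDiff_iff_contDiffAt]
  intro y
  by_cases hy : y = 0
  · subst hy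
    exact contDiffAt_const.congr_of_eventuallyEq (cutoff_eventually_zero d hσ hχ0 hχ1)
  · have h1 : ContDiffAt ℝ (⊤ : ℕ∞) (fun y => euclNorm d y ^ σ) y :=
      (contDiffAt_euclNorm d hy).rpow_const_of_ne (euclNorm_pos d hy).ne'
    have h2 : ContDiff ℝ (⊤ : ℕ∞) (deriv χ) := (contDiff_infty_iff_deriv.mp hχ).2
    exact h1.mul (h2.contDiffAt.comp y h1)

lemma cutoff_iteratedFDeriv_bounded (d : ℕ) {σ : ℝ} (hσ : 0 < σ) {χ : ℝ → ℝ}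
    (hχ : ContDiff ℝ (⊤ : ℕ∞) χ)
    (hχ0 : ∀ r : ℝ, |r| ≤ 1 / 4 → χ r = 0) (hχ1 : ∀ r : ℝ, 1 / 2 ≤ |r| → χ r = 1) (n : ℕ) :
    ∃ C : ℝ, ∀ y, ‖iteratedFDeriv ℝ n (cutoff d σ χ) y‖ ≤ C := by
  have hc : HasCompactSupport (cutoff d σ χ) := by
    refine HasCompactSupport.of_support_subset_isCompact (isCompact_closedBall (0 : Vd d) 1) ?_
    intro y hy
    have := (tsupport_cutoff_subset d hσ hχ0 hχ1 (subset_tsupport _ hy)).2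
    rw [mem_closedBall_zero_iff]
    exact (norm_le_euclNorm d y).trans this
  exact ((contDiff_cutoff d hσ hχ hχ0 hχ1).continuous_iteratedFDeriv
    (by exact_mod_cast le_top)).bounded_above_of_compact_support (hc.iteratedFDeriv n)

/-! ### The rescaled profile times `G` -/

lemma contDiff_cutoff_mul (d : ℕ) {σ : ℝ} (hσ : 0 < σ) {χ : ℝ → ℝ} (hχ : ContDiff ℝ (⊤ : ℕ∞) χ)
    (hχ0 : ∀ r : ℝ, |r| ≤ 1 / 4 → χ r = 0) (hχ1 : ∀ r : ℝ, 1 / 2 ≤ |r| → χ r = 1)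
    {G : Vd d → ℝ} (hG : ContDiffOn ℝ (⊤ : ℕ∞) G {(0 : Vd d)}ᶜ) (a : ℝ) :
    ContDiff ℝ (⊤ : ℕ∞) (fun x => cutoff d σ χ (a • x) * G x) := by
  rw [contDiff_iff_contDiffAt]
  intro x
  by_cases hx : x = 0
  · subst hx
    have ht : Filter.Tendsto (fun x : Vd d => a • x) (nhds 0) (nhds 0) := by
      have : Continuous (fun x : Vd d => a • x) := by fun_prop
      simpa using this.tendsto 0
    refine (contDiffAt_const (c := (0 : ℝ))).congr_of_eventuallyEq ?_
    filter_upwards [ht.eventually (cutoff_eventually_zero d hσ hχ0 hχ1)] with y hy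
    rw [hy, zero_mul]
  · have h1 : ContDiff ℝ (⊤ : ℕ∞) (fun x : Vd d => cutoff d σ χ (a • x)) :=
      (contDiff_cutoff d hσ hχ hχ0 hχ1).comp (contDiff_const_smul a)
    exact h1.contDiffAt.mul (hG.contDiffAt (isOpen_compl_singleton.mem_nhds hx))

/-- The factor `ρ⁻ⁿ` comes from either term of the Leibniz rule: from the rescaling when a
derivative falls on the profile, and from `|x| ≥ innerRadius σ * ρ` when it falls on `G`. -/
lemma cutoff_mul_bound (d : ℕ) {σ : ℝ} (hσ : 0 < σ) {χ : ℝ → ℝ} (hχ : ContDiff ℝ (⊤ : ℕ∞) χ)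
    (hχ0 : ∀ r : ℝ, |r| ≤ 1 / 4 → χ r = 0) (hχ1 : ∀ r : ℝ, 1 / 2 ≤ |r| → χ r = 1)
    {G : Vd d → ℝ} (hG : ContDiffOn ℝ (⊤ : ℕ∞) G {(0 : Vd d)}ᶜ) {s : ℝ} (hs : s < d)
    (hGs : ∀ n : ℕ, ∃ C : ℝ, ∀ x : Vd d, x ≠ 0 →
      ‖iteratedFDerivWithin ℝ n G {(0 : Vd d)}ᶜ x‖ ≤ C * (euclNorm d x) ^ (s - d - n)) (n : ℕ) :
    ∃ A : ℝ, 0 ≤ A ∧ ∀ ρ : ℝ, 0 < ρ → ∀ x : Vd d,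
      ‖iteratedFDeriv ℝ n (fun x => cutoff d σ χ (ρ⁻¹ • x) * G x) x‖ ≤
        A * (ρ⁻¹) ^ n * (Metric.closedBall (0 : Vd d) ρ).indicator (fun _ => ρ ^ (s - d)) x := by
  choose P hP using cutoff_iteratedFDeriv_bounded d hσ hχ hχ0 hχ1
  choose Q hQ using hGs
  have hr0 := innerRadius_pos σ
  refine ⟨∑ i ∈ Finset.range (n + 1),
    (n.choose i : ℝ) * |P i| * (|Q (n - i)| * innerRadius σ ^ (s - d - (n - i : ℕ))),
    by positivity, ?_⟩
  intro ρ hρ x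
  set A := ∑ i ∈ Finset.range (n + 1),
    (n.choose i : ℝ) * |P i| * (|Q (n - i)| * innerRadius σ ^ (s - d - (n - i : ℕ))) with hA
  have hA0 : 0 ≤ A := by positivity
  by_cases hx : ρ⁻¹ • x ∈ tsupport (cutoff d σ χ)
  · obtain ⟨hx1, hx2⟩ := tsupport_cutoff_subset d hσ hχ0 hχ1 hx
    rw [euclNorm_smul d (inv_nonneg.mpr hρ.le)] at hx1 hx2
    have hx1' : innerRadius σ * ρ ≤ euclNorm d x := by
      rwa [le_inv_mul_iff₀ hρ, mul_comm] at hx1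
    have hx2' : euclNorm d x ≤ ρ := by
      rwa [inv_mul_le_iff₀ hρ, mul_one] at hx2
    have hx0 : x ≠ 0 := by
      rintro rfl
      rw [euclNorm_zero] at hx1'
      exact absurd hx1' (not_le.mpr (by positivity))
    have hmem : x ∈ Metric.closedBall (0 : Vd d) ρ := by
      rw [mem_closedBall_zero_iff]
      exact (norm_le_euclNorm d x).trans hx2'
    rw [Set.indicator_of_mem hmem]
    have hopen : IsOpen ({(0 : Vd d)}ᶜ) := isOpen_compl_singleton
    have hφ : ContDiff ℝ (⊤ : ℕ∞) (fun x : Vd d => cutoff d σ χ (ρ⁻¹ • x)) :=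
      (contDiff_cutoff d hσ hχ hχ0 hχ1).comp (contDiff_const_smul _)
    rw [← iteratedFDerivWithin_of_isOpen n hopen hx0]
    refine (norm_iteratedFDerivWithin_mul_le hφ.contDiffOn hG hopen.uniqueDiffOn hx0
      (by exact_mod_cast le_top)).trans ?_
    rw [hA, Finset.sum_mul, Finset.sum_mul]
    refine Finset.sum_le_sum fun i hi => ?_
    have hin : i ≤ n := Nat.lt_succ_iff.mp (Finset.mem_range.mp hi)
    have b1 : ‖iteratedFDerivWithin ℝ i (fun x : Vd d => cutoff d σ χ (ρ⁻¹ • x)) {(0 : Vd d)}ᶜ x‖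
        ≤ (ρ⁻¹) ^ i * |P i| := by
      rw [iteratedFDerivWithin_of_isOpen i hopen hx0, iteratedFDeriv_comp_const_smul _
        ((contDiff_cutoff d hσ hχ hχ0 hχ1).of_le (by exact_mod_cast le_top)), norm_smul,
        Real.norm_of_nonneg (by positivity)]
      gcongr
      exact (hP i _).trans (le_abs_self _)
    have b2 : ‖iteratedFDerivWithin ℝ (n - i) G {(0 : Vd d)}ᶜ x‖
        ≤ |Q (n - i)| * (innerRadius σ ^ (s - d - (n - i : ℕ))
          * (ρ ^ (s - d) * (ρ⁻¹) ^ (n - i))) := by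
      refine (hQ (n - i) x hx0).trans ?_
      have hexp : s - d - ((n - i : ℕ) : ℝ) ≤ 0 := by
        have : (0 : ℝ) ≤ ((n - i : ℕ) : ℝ) := Nat.cast_nonneg _
        linarith
      have h1 : euclNorm d x ^ (s - d - ((n - i : ℕ) : ℝ))
          ≤ (innerRadius σ * ρ) ^ (s - d - ((n - i : ℕ) : ℝ)) :=
        Real.rpow_le_rpow_of_nonpos (by positivity) hx1' hexp
      rw [Real.mul_rpow hr0.le hρ.le, Real.rpow_sub hρ (s - d), Real.rpow_natCast, div_eq_mul_inv,
        ← inv_pow] at h1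
      have h2 : 0 ≤ euclNorm d x ^ (s - d - ((n - i : ℕ) : ℝ)) :=
        Real.rpow_nonneg (euclNorm_nonneg d x) _
      gcongr
      exact le_abs_self _
    calc _ ≤ (n.choose i : ℝ) * ((ρ⁻¹) ^ i * |P i|) *
          (|Q (n - i)| * (innerRadius σ ^ (s - d - (n - i : ℕ))
          * (ρ ^ (s - d) * (ρ⁻¹) ^ (n - i)))) := by gcongr
      _ = _ := by
        have : (ρ⁻¹) ^ n = (ρ⁻¹) ^ i * (ρ⁻¹) ^ (n - i) := by
          rw [← pow_add, Nat.add_sub_cancel' hin]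
        rw [this]
        ring
  · have hz : iteratedFDeriv ℝ n (fun x => cutoff d σ χ (ρ⁻¹ • x) * G x) x = 0 := by
      have hcont : Continuous (fun x : Vd d => ρ⁻¹ • x) := by fun_prop
      have he : (fun x => cutoff d σ χ (ρ⁻¹ • x) * G x) =ᶠ[nhds x] fun _ => (0 : ℝ) := by
        filter_upwards [hcont.continuousAt.eventually
          (notMem_tsupport_iff_eventuallyEq.mp hx)] with y hy
        rw [hy, Pi.zero_apply, zero_mul]
      rw [(he.iteratedFDeriv ℝ n).eq_of_nhds]
      have := iteratedFDeriv_fun_zero (𝕜 := ℝ) (E := Vd d) (F := ℝ) (n := n)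
      exact congrFun this x
    rw [hz, norm_zero]
    have : 0 ≤ (Metric.closedBall (0 : Vd d) ρ).indicator (fun _ => ρ ^ (s - d)) x :=
      Set.indicator_nonneg (fun _ _ => by positivity) x
    positivity

/-! ### Powers of `1 - t²Δ` -/

lemma contDiff_lap_term (d : ℕ) {f : Vd d → ℝ} (hf : ContDiff ℝ (⊤ : ℕ∞) f) (e : Vd d) :
    ContDiff ℝ (⊤ : ℕ∞) (fun y => fderiv ℝ f y e) :=
  (hf.fderiv_right (m := (⊤ : ℕ∞)) (by exact_mod_cast le_top)).clm_apply contDiff_const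

lemma contDiff_lap (d : ℕ) {f : Vd d → ℝ} (hf : ContDiff ℝ (⊤ : ℕ∞) f) :
    ContDiff ℝ (⊤ : ℕ∞) (lap d f) :=
  ContDiff.sum fun _ _ => contDiff_lap_term d (contDiff_lap_term d hf _) _

lemma norm_iteratedFDeriv_lap_term_le (d : ℕ) {f : Vd d → ℝ} (hf : ContDiff ℝ (⊤ : ℕ∞) f)
    (i : Fin d) (n : ℕ) (x : Vd d) :
    ‖iteratedFDeriv ℝ n (fun y => fderiv ℝ f y (Pi.single i 1)) x‖
      ≤ ‖iteratedFDeriv ℝ (n + 1) f x‖ := by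
  have h := norm_iteratedFDeriv_clm_apply_const (𝕜 := ℝ) (f := fderiv ℝ f)
    (c := (Pi.single i 1 : Vd d)) (x := x) (N := (⊤ : ℕ∞)) (n := n)
    (hf.fderiv_right (m := (⊤ : ℕ∞)) (by exact_mod_cast le_top)).contDiffAt
    (by exact_mod_cast le_top)
  rwa [Pi.norm_single, norm_one, one_mul, norm_iteratedFDeriv_fderiv] at h

lemma norm_iteratedFDeriv_lap_le (d : ℕ) {f : Vd d → ℝ} (hf : ContDiff ℝ (⊤ : ℕ∞) f)
    (n : ℕ) (x : Vd d) :
    ‖iteratedFDeriv ℝ n (lap d f) x‖ ≤ d * ‖iteratedFDeriv ℝ (n + 2) f x‖ := by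
  unfold lap
  rw [iteratedFDeriv_fun_sum_apply (fun j _ =>
    ((contDiff_lap_term d (contDiff_lap_term d hf _) _).of_le
      (by exact_mod_cast le_top)).contDiffAt)]
  refine (norm_sum_le _ _).trans ?_
  refine (Finset.sum_le_card_nsmul _ _ ‖iteratedFDeriv ℝ (n + 2) f x‖ fun i _ => ?_).trans
    (by simp)
  exact (norm_iteratedFDeriv_lap_term_le d (contDiff_lap_term d hf _) i n x).trans
    (norm_iteratedFDeriv_lap_term_le d hf i (n + 1) x)

/-- If each derivative of `f` costs at most a factor `t⁻¹`, then the powers of `1 - t²Δ` act on `f`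
at the cost of a constant that does not depend on `t` or on the majorant `M`. -/
lemma opIter_bound (d : ℕ) (m : ℕ) (A : ℕ → ℝ) :
    ∃ B : ℝ, ∀ t : ℝ, 0 < t → ∀ (M : Vd d → ℝ) (f : Vd d → ℝ), ContDiff ℝ (⊤ : ℕ∞) f →
      (∀ n x, ‖iteratedFDeriv ℝ n f x‖ ≤ A n * (t⁻¹) ^ n * M x) →
      ∀ x, ‖opIter d t m f x‖ ≤ B * M x := by
  induction m generalizing A with
  | zero =>
    refine ⟨A 0, fun t ht M f hf h x => ?_⟩
    simpa [opIter] using h 0 x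
  | succ m ih =>
    obtain ⟨B, hB⟩ := ih (fun n => A n + d * A (n + 2))
    refine ⟨B, fun t ht M f hf h x => ?_⟩
    have hop : opIter d t (m + 1) f = opIter d t m (opOnce d t f) := rfl
    rw [hop]
    have hl := contDiff_lap d hf
    have hl2 : ContDiff ℝ (⊤ : ℕ∞) ((t ^ 2) • lap d f) := hl.const_smul (t ^ 2)
    have hopf : opOnce d t f = f - (t ^ 2) • lap d f := rfl
    refine hB t ht M _ (by rw [hopf]; exact hf.sub hl2) (fun n y => ?_) x
    rw [hopf, iteratedFDeriv_sub_apply (hf.of_le (by exact_mod_cast le_top)).contDiffAt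
      (hl2.of_le (by exact_mod_cast le_top)).contDiffAt,
      iteratedFDeriv_const_smul_apply (hl.of_le (by exact_mod_cast le_top)).contDiffAt]
    calc _ ≤ ‖iteratedFDeriv ℝ n f y‖ + t ^ 2 * ‖iteratedFDeriv ℝ n (lap d f) y‖ := by
          refine (norm_sub_le _ _).trans ?_
          rw [norm_smul, Real.norm_of_nonneg (by positivity)]
      _ ≤ A n * (t⁻¹) ^ n * M y + t ^ 2 * (d * (A (n + 2) * (t⁻¹) ^ (n + 2) * M y)) := by
          gcongr
          · exact h n y
          · refine (norm_iteratedFDeriv_lap_le d hf n y).trans ?_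
            gcongr
            exact h (n + 2) y
      _ = _ := by
          have ht' : t ^ 2 * (t⁻¹) ^ (n + 2) = (t⁻¹) ^ n := by
            rw [pow_add, mul_left_comm, ← mul_pow, mul_inv_cancel₀ ht.ne', one_pow, mul_one]
          linear_combination (d * A (n + 2) * M y) * ht'

lemma opIter_zero_fun (d : ℕ) (t : ℝ) (m : ℕ) : opIter d t m (fun _ => 0) = fun _ => 0 := by
  have h : opOnce d t (fun _ => 0) = fun _ => 0 := by
    funext x
    simp [opOnce, lap]
  exact Function.iterate_fixed h m

/-! ### The parameter derivative and its length scale -/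

/-- The value `Ġ_μ(x)`, with `a = |x|^σ` and `g = G x`. -/
lemma deriv_scale {χ : ℝ → ℝ} (hχ : ContDiff ℝ (⊤ : ℕ∞) χ) (a g : ℝ) {μ : ℝ} (hμ : 0 < μ) :
    deriv (fun ν : ℝ => χ (a * (1 - ν) / ν) * g) μ
      = -(μ ^ 2)⁻¹ * (a * deriv χ (a * (1 - μ) / μ) * g) := by
  have h1 : HasDerivAt (fun ν : ℝ => a * (1 - ν) / ν)
      ((a * (0 - 1) * μ - a * (1 - μ) * 1) / μ ^ 2) μ :=
    (((hasDerivAt_const μ (1 : ℝ)).sub (hasDerivAt_id μ)).const_mul a).div (hasDerivAt_id μ) hμ.ne'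
  have h2 : HasDerivAt χ (deriv χ (a * (1 - μ) / μ)) (a * (1 - μ) / μ) :=
    (hχ.differentiable (by simp)).differentiableAt.hasDerivAt
  have h3 := (HasDerivAt.comp (h := fun ν : ℝ => a * (1 - ν) / ν) μ h2 h1).mul_const g
  have h4 := h3.deriv
  simp only [Function.comp_def] at h4
  rw [h4]
  field_simp
  ring

/-- The length scale `ρ = (μ / (1 - μ)) ^ (1 / σ)` at which `Ġ_μ` is concentrated. -/
def scale (σ μ : ℝ) : ℝ := (μ / (1 - μ)) ^ (1 / σ)

lemma scale_rpow {σ μ : ℝ} (hσ : σ ≠ 0) (h0 : 0 < μ) (h1 : μ < 1) :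
    scale σ μ ^ σ = μ / (1 - μ) := by
  have : 0 < 1 - μ := by linarith
  rw [scale, ← Real.rpow_mul (by positivity), one_div_mul_cancel hσ, Real.rpow_one]

lemma scale_pos {σ μ : ℝ} (h0 : 0 < μ) (h1 : μ < 1) : 0 < scale σ μ := by
  have : 0 < 1 - μ := by linarith
  unfold scale
  positivity

lemma scaleDeriv_eq (d : ℕ) {σ : ℝ} (hσ : 0 < σ) {χ : ℝ → ℝ} (hχ : ContDiff ℝ (⊤ : ℕ∞) χ)
    (G : Vd d → ℝ) {μ : ℝ} (h0 : 0 < μ) (h1 : μ < 1) :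
    (fun x => deriv (fun ν : ℝ => χ ((euclNorm d x) ^ σ * (1 - ν) / ν) * G x) μ)
      = (-(μ ^ 2)⁻¹ * scale σ μ ^ σ) •
        fun x => cutoff d σ χ ((scale σ μ)⁻¹ • x) * G x := by
  funext x
  have hρ := scale_pos (σ := σ) h0 h1
  have h1' : 0 < 1 - μ := by linarith
  have hn : euclNorm d ((scale σ μ)⁻¹ • x) ^ σ = euclNorm d x ^ σ * (1 - μ) / μ := by
    rw [euclNorm_smul d (by positivity), Real.mul_rpow (by positivity) (euclNorm_nonneg d x),
      Real.inv_rpow hρ.le, scale_rpow hσ.ne' h0 h1]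
    field_simp
  rw [deriv_scale hχ _ _ h0, Pi.smul_apply, smul_eq_mul, cutoff, hn, scale_rpow hσ.ne' h0 h1]
  field_simp

/-! ### The `L¹` estimate -/

/-- The `L¹` estimate in terms of `ρ = scale σ μ`, for a homogeneity exponent `s < d` of the
derivative bounds on `G`. -/
lemma scale_bound (d : ℕ) {σ : ℝ} (hσ : 0 < σ) {χ : ℝ → ℝ} (hχ : ContDiff ℝ (⊤ : ℕ∞) χ)
    (hχ0 : ∀ r : ℝ, |r| ≤ 1 / 4 → χ r = 0) (hχ1 : ∀ r : ℝ, 1 / 2 ≤ |r| → χ r = 1)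
    {G : Vd d → ℝ} (hG : ContDiffOn ℝ (⊤ : ℕ∞) G {(0 : Vd d)}ᶜ) {s : ℝ} (hs : s < d)
    (hGs : ∀ n : ℕ, ∃ C : ℝ, ∀ x : Vd d, x ≠ 0 →
      ‖iteratedFDerivWithin ℝ n G {(0 : Vd d)}ᶜ x‖ ≤ C * (euclNorm d x) ^ (s - d - n)) (m : ℕ) :
    ∃ C : ℝ, 0 ≤ C ∧ ∀ μ : ℝ, 0 < μ → μ < 1 →
      eLpNorm
        (opIter d (μ ^ (1 / σ)) m
          (fun x => deriv (fun ν : ℝ => χ ((euclNorm d x) ^ σ * (1 - ν) / ν) * G x) μ))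
        1 volume
        ≤ ENNReal.ofReal (C * ((μ ^ 2)⁻¹ * scale σ μ ^ (σ + s))) := by
  choose A hA0 hA using cutoff_mul_bound d hσ hχ hχ0 hχ1 hG hs hGs
  obtain ⟨B, hB⟩ := opIter_bound d m A
  refine ⟨|B| * 2 ^ d, by positivity, fun μ h0 h1 => ?_⟩
  have h1' : 0 < 1 - μ := by linarith
  rw [scaleDeriv_eq d hσ hχ G h0 h1]
  set ρ := scale σ μ with hρdef
  have hρ : 0 < ρ := scale_pos h0 h1
  set t := μ ^ (1 / σ) with htdef
  have ht : 0 < t := by positivity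
  have htρ : t ≤ ρ := by
    refine Real.rpow_le_rpow h0.le ?_ (by positivity)
    rw [le_div_iff₀ h1']
    nlinarith
  set κ := (μ ^ 2)⁻¹ * ρ ^ σ with hκ
  have hκ0 : 0 ≤ κ := by positivity
  set I := (Metric.closedBall (0 : Vd d) ρ).indicator (fun _ => ρ ^ (s - d)) with hI
  have hI0 : ∀ x, 0 ≤ I x := fun x => Set.indicator_nonneg (fun _ _ => by positivity) x
  have hsm := contDiff_cutoff_mul d hσ hχ hχ0 hχ1 hG ρ⁻¹
  have hcs : -(μ ^ 2)⁻¹ * ρ ^ σ = -κ := by rw [hκ]; ring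
  rw [hcs]
  have key := hB t ht (fun x => κ * I x) _ (hsm.const_smul (-κ)) (fun n x => by
    have hfun : (fun y => -κ • (cutoff d σ χ (ρ⁻¹ • y) * G y))
      = (-κ) • fun y => cutoff d σ χ (ρ⁻¹ • y) * G y := rfl
    rw [hfun, iteratedFDeriv_const_smul_apply (hsm.of_le (by exact_mod_cast le_top)).contDiffAt,
      norm_smul, norm_neg, Real.norm_of_nonneg hκ0]
    calc κ * _ ≤ κ * (A n * (ρ⁻¹) ^ n * I x) := by gcongr; exact hA n ρ hρ x
      _ ≤ κ * (A n * (t⁻¹) ^ n * I x) := by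
        have := hI0 x
        have := hA0 n
        gcongr
      _ = _ := by ring)
  have key2 : ∀ x, ‖opIter d t m ((-κ) • fun x => cutoff d σ χ (ρ⁻¹ • x) * G x) x‖
      ≤ (Metric.closedBall (0 : Vd d) ρ).indicator (fun _ => |B| * (κ * ρ ^ (s - d))) x := by
    intro x
    refine (key x).trans ?_
    by_cases hx : x ∈ Metric.closedBall (0 : Vd d) ρ
    · simp only [hI, Set.indicator_of_mem hx]
      gcongr
      exact le_abs_self B
    · simp only [hI, Set.indicator_of_notMem hx, mul_zero, le_refl]
  refine (eLpNorm_mono_real key2).trans ((eLpNorm_indicator_const_le _ _).trans ?_)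
  rw [Real.volume_pi_closedBall _ hρ.le, ENNReal.toReal_one, div_one, ENNReal.rpow_one,
    Real.enorm_of_nonneg (by positivity), ← ENNReal.ofReal_mul (by positivity), Fintype.card_fin]
  refine ENNReal.ofReal_le_ofReal (le_of_eq ?_)
  have hpow : ρ ^ (σ + s) = ρ ^ σ * ρ ^ (s - d) * ρ ^ d := by
    rw [← Real.rpow_natCast ρ d, ← Real.rpow_add hρ, ← Real.rpow_add hρ]
    congr 1
    ring
  rw [hpow, hκ]
  ring

/-- The decay at infinity allows the homogeneity exponent `σ` to be replaced by `-σ`. -/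
lemma bound_neg (d : ℕ) {σ : ℝ} (hσ0 : 0 < σ) (hσd : σ < d) {G : Vd d → ℝ}
    (hGb : ∀ n : ℕ, ∃ C : ℝ, ∀ x : Vd d, x ≠ 0 →
      ‖iteratedFDerivWithin ℝ n G {(0 : Vd d)}ᶜ x‖ ≤ C * (euclNorm d x) ^ (σ - d - n))
    (hGdecay : ∀ n N : ℕ, ∃ C : ℝ, ∀ x : Vd d, 1 ≤ euclNorm d x →
      ‖iteratedFDerivWithin ℝ n G {(0 : Vd d)}ᶜ x‖ ≤ C * (euclNorm d x) ^ (-(N : ℝ))) (n : ℕ) :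
    ∃ C : ℝ, ∀ x : Vd d, x ≠ 0 →
      ‖iteratedFDerivWithin ℝ n G {(0 : Vd d)}ᶜ x‖ ≤ C * (euclNorm d x) ^ (-σ - d - n) := by
  obtain ⟨C₁, h₁⟩ := hGb n
  -- `N = 2 * d + n` exceeds `σ + d + n`.
  obtain ⟨C₂, h₂⟩ := hGdecay n (2 * d + n)
  refine ⟨max |C₁| |C₂|, fun x hx => ?_⟩
  have hp := euclNorm_pos d hx
  by_cases h : 1 ≤ euclNorm d x
  · refine (h₂ x h).trans ?_
    have hle : euclNorm d x ^ (-((2 * d + n : ℕ) : ℝ)) ≤ euclNorm d x ^ (-σ - d - n) := by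
      refine Real.rpow_le_rpow_of_exponent_le h ?_
      push_cast
      linarith
    gcongr
    exact (le_abs_self _).trans (le_max_right _ _)
  · refine (h₁ x hx).trans ?_
    have hle : euclNorm d x ^ (σ - d - n) ≤ euclNorm d x ^ (-σ - d - n) :=
      Real.rpow_le_rpow_of_exponent_ge hp (not_le.mp h).le (by linarith)
    gcongr
    exact (le_abs_self _).trans (le_max_left _ _)

/-- Uniform L¹ bound on the scale decomposition of a Green-type function:
with `G_μ(x) = χ(|x|^σ (1-μ)/μ)·G(x)` and `Ġ_μ = ∂_μ G_μ`, for every `l ∈ ℕ` one has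
`‖(1-[μ]²Δ)^{l(d+2)} Ġ_μ‖_{L¹(ℝ^d)} ≤ C` uniformly in `μ ∈ (0,1]`, where `[μ] = μ^{1/σ}`. -/
theorem stmt1 (d : ℕ) (hd : 0 < d) (σ : ℝ) (hσ0 : 0 < σ) (hσd : σ < d)
    (G : Vd d → ℝ) (hG : ContDiffOn ℝ (⊤ : ℕ∞) G {(0 : Vd d)}ᶜ)
    (hGb : ∀ n : ℕ, ∃ C : ℝ, ∀ x : Vd d, x ≠ 0 →
      ‖iteratedFDerivWithin ℝ n G {(0 : Vd d)}ᶜ x‖ ≤ C * (euclNorm d x) ^ (σ - d - n))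
    (hGdecay : ∀ n N : ℕ, ∃ C : ℝ, ∀ x : Vd d, 1 ≤ euclNorm d x →
      ‖iteratedFDerivWithin ℝ n G {(0 : Vd d)}ᶜ x‖ ≤ C * (euclNorm d x) ^ (-(N : ℝ)))
    (χ : ℝ → ℝ) (hχ : ContDiff ℝ (⊤ : ℕ∞) χ)
    (hχ0 : ∀ r : ℝ, |r| ≤ 1 / 4 → χ r = 0) (hχ1 : ∀ r : ℝ, 1 / 2 ≤ |r| → χ r = 1) :
    ∀ l : ℕ, ∃ C : ℝ, ∀ μ ∈ Set.Ioc (0 : ℝ) 1,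
      eLpNorm
        (opIter d (μ ^ (1 / σ)) (l * (d + 2))
          (fun x => deriv (fun ν : ℝ => χ ((euclNorm d x) ^ σ * (1 - ν) / ν) * G x) μ))
        1 volume
        ≤ ENNReal.ofReal C := by
  intro l
  set m := l * (d + 2)
  obtain ⟨C₁, hC₁, h₁⟩ := scale_bound d hσ0 hχ hχ0 hχ1 hG hσd hGb m
  obtain ⟨C₂, hC₂, h₂⟩ := scale_bound d hσ0 hχ hχ0 hχ1 hG (s := -σ) (by linarith)
    (bound_neg d hσ0 hσd hGb hGdecay) m
  refine ⟨4 * C₁ + 4 * C₂, ?_⟩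
  rintro μ ⟨h0, h1⟩
  rcases h1.eq_or_lt with rfl | h1
  · have hz : (fun x => deriv (fun ν : ℝ => χ ((euclNorm d x) ^ σ * (1 - ν) / ν) * G x) 1)
        = fun _ => (0 : ℝ) := by
      funext x
      have hd0 : deriv χ 0 = 0 := by
        have he : χ =ᶠ[nhds 0] fun _ => 0 := by
          filter_upwards [(isOpen_lt continuous_abs continuous_const).mem_nhds
            (show |(0 : ℝ)| < 1 / 4 by norm_num)] with r hr
          exact hχ0 r (le_of_lt hr)
        rw [he.deriv_eq, deriv_const]
      rw [deriv_scale hχ _ _ one_pos]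
      simp [hd0]
    rw [hz, opIter_zero_fun]
    simp
  · have h1' : 0 < 1 - μ := by linarith
    by_cases hh : μ ≤ 1 / 2
    · refine (h₁ μ h0 h1).trans (ENNReal.ofReal_le_ofReal ?_)
      rw [Real.rpow_add (scale_pos h0 h1), scale_rpow hσ0.ne' h0 h1]
      have e : (μ ^ 2)⁻¹ * (μ / (1 - μ) * (μ / (1 - μ))) = ((1 - μ) ^ 2)⁻¹ := by
        field_simp
      have b : ((1 - μ) ^ 2)⁻¹ ≤ 4 := inv_le_of_inv_le₀ (by norm_num) (by nlinarith)
      rw [e]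
      nlinarith
    · refine (h₂ μ h0 h1).trans (ENNReal.ofReal_le_ofReal ?_)
      rw [add_neg_cancel, Real.rpow_zero, mul_one]
      have b : (μ ^ 2)⁻¹ ≤ 4 := inv_le_of_inv_le₀ (by norm_num) (by nlinarith)
      nlinarith
end
end

section
/- Bound for the bilinear map B on the spaces 𝒱^m: Let d be a positive integer, m∈ℕ and k∈{0,…,m}. For every continuous integrable function G on ℝ^d, every W∈𝒱^{1+k} and every U∈𝒱^{m−k}, the kernel B(G,W,U) defined by B(G,W,U)(x;dy₁,…,dy_m) := (1/m!) Σ_{π∈S_m} ∫_{ℝ^d}∫_{ℝ^d} W(x;dy,dy_{π(1)},…,dy_{π(k)}) G(y−z) U(z;dy_{π(k+1)},…,dy_{π(m)}) dz belongs to 𝒱^m and satisfies ‖B(G,W,U)‖_{𝒱^m} ≤ ‖G‖_{L¹(ℝ^d)}·‖W‖_{𝒱^{1+k}}·‖U‖_{𝒱^{m−k}}. -/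
/-!
The kernel `B(G, W, U)(x; ·)` is constructed as an honest signed measure. The composition-product of
a signed measure with a measurable, uniformly bounded signed kernel (`compProd`) turns
`W(x; dw) G(w₀ - z) dz U(z; du)` into a signed measure on the space of all `(w, z, u)`
(`triple`); here `z ↦ U(z; A)` is measurable because `U(z; A)` is the mass which the centred
measure `U(z; · + z)`, continuous in `z`, gives to the section of a measurable set
(`IsV.measurable`). `Bker` is the average over `π` of the images of this measure under reassembly of
the variables. Fubini's theorem `smInt_compProd`, a consequence of the functional monotone class
principle `BM.induction`, identifies its pairings with `Bweak`.

The norm bound holds for each `x`: a composition-product has total variation at most the product of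
the total variations (`tvNorm_compProd_le`), and images and averages do not increase it.

The delicate point is the continuity of `x ↦ B(x; A + x)`. Translating all variables by `x`
(`Bker_shift`) writes it as an average of integrals of bounded functions `innerInt … x` against the
centred measures `cen W x`. As `x → x₀` the functions converge pointwise and boundedly, by dominated
convergence, but the measures converge only setwise. The integrals still converge
(`smInt_tendsto_setwise`), because by the Vitali–Hahn–Saks theorem (`vitali_hahn_saks`) a setwise
convergent sequence of measures is uniformly absolutely continuous with respect to one finite
measure, for which pointwise convergence implies convergence in measure. Periodicity is immediate
from the same formula.
-/

open MeasureTheory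

noncomputable section

/-- Integration of a function against a finite signed measure, via the Jordan
decomposition. -/
def smInt {α : Type} [MeasurableSpace α] (s : MeasureTheory.SignedMeasure α) (f : α → ℝ) : ℝ :=
  (∫ y, f y ∂s.toJordanDecomposition.posPart) - ∫ y, f y ∂s.toJordanDecomposition.negPart

/-- The total variation norm of a finite signed measure. -/
def tvNorm {α : Type} [MeasurableSpace α] (s : MeasureTheory.SignedMeasure α) : ℝ :=
  (s.totalVariation Set.univ).toReal

/-- A kernel on `ℝ^d × Borel((ℝ^d)^m)`: for each `x ∈ ℝ^d` a finite signed measure on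
`(ℝ^d)^m`. -/
abbrev Ker (d m : ℕ) := Vd d → MeasureTheory.SignedMeasure (Fin m → Vd d)

/-- The set `A + x` (every component of `A` shifted by `x`), written as a preimage. -/
def shiftSet (d m : ℕ) (x : Vd d) (A : Set (Fin m → Vd d)) : Set (Fin m → Vd d) :=
  (fun z : Fin m → Vd d => fun j => z j - x) ⁻¹' A

/-- Membership in the space `𝒱^m`: (i) for every Borel set `A` the map `x ↦ V(x;A+x)` is
continuous and `2π`-periodic in each coordinate, (ii) each `V(x;·)` is a signed measure of
finite total variation (automatic for `SignedMeasure`), and (iii) the norm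
`‖V‖ = sup_x |V(x;·)|((ℝ^d)^m)` is finite. -/
structure IsV (d m : ℕ) (V : Ker d m) : Prop where
  cont : ∀ A : Set (Fin m → Vd d), MeasurableSet A →
    Continuous fun x : Vd d => V x (shiftSet d m x A)
  periodic : ∀ A : Set (Fin m → Vd d), MeasurableSet A → ∀ (x : Vd d) (i : Fin d),
    V (x + Pi.single i (2 * Real.pi))
        (shiftSet d m (x + Pi.single i (2 * Real.pi)) A)
      = V x (shiftSet d m x A)
  bdd : BddAbove (Set.range fun x : Vd d => tvNorm (V x))

/-- The `𝒱^m` norm `‖V‖ = sup_x ∫_{(ℝ^d)^m} |V(x; dy₁⋯dy_m)|`. -/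
def vNorm (d m : ℕ) (V : Ker d m) : ℝ := ⨆ x : Vd d, tvNorm (V x)

/-- Reassembly of the `y`-variables in the definition of the map `B`: given the
permutation `π`, the variable `y_{π(t)}` comes from the `(t+1)`-st variable of `W` when
`t < k`, and from the `(t-k)`-th variable of `U` otherwise. -/
def assemble (d m k : ℕ) (π : Equiv.Perm (Fin m))
    (w : Fin (k + 1) → Vd d) (u : Fin (m - k) → Vd d) : Fin m → Vd d := fun i =>
  if h : ((π.symm i : Fin m) : ℕ) < k then
    w ⟨((π.symm i : Fin m) : ℕ) + 1, by omega⟩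
  else
    u ⟨((π.symm i : Fin m) : ℕ) - k, by
        have := (π.symm i).isLt; omega⟩

/-- The weak pairing of the kernel `B(G,W,U)` against a test function `f`:
`⟨B(G,W,U)(x;·), f⟩ = (1/m!) Σ_π ∫ W(x; dy,dy_{π(1)},…,dy_{π(k)}) G(y-z)
U(z; dy_{π(k+1)},…,dy_{π(m)}) f(y₁,…,y_m) dz`. -/
def Bweak (d m k : ℕ) (G : Vd d → ℝ) (W : Ker d (k + 1)) (U : Ker d (m - k))
    (x : Vd d) (f : (Fin m → Vd d) → ℝ) : ℝ :=
  ((Nat.factorial m : ℝ))⁻¹ *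
    ∑ π : Equiv.Perm (Fin m),
      smInt (W x) fun w =>
        ∫ z : Vd d, G (w 0 - z) * smInt (U z) fun u => f (assemble d m k π w u)

open Filter Topology

/-! ### Integrals of bounded measurable functions against signed measures -/

/-- Bounded measurable real functions. -/
structure BM {α : Type} [MeasurableSpace α] (f : α → ℝ) : Prop where
  meas : Measurable f
  bdd : ∃ M, ∀ y, |f y| ≤ M

section Basic

variable {α : Type} [MeasurableSpace α]

lemma BM.indicator_one {A : Set α} (hA : MeasurableSet A) : BM (A.indicator fun _ => (1 : ℝ)) := by
  refine ⟨measurable_const.indicator hA, 1, fun y => ?_⟩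
  by_cases h : y ∈ A <;> simp [h]

lemma BM.add {f g : α → ℝ} (hf : BM f) (hg : BM g) : BM (fun y => f y + g y) := by
  obtain ⟨M, hM⟩ := hf.bdd
  obtain ⟨N, hN⟩ := hg.bdd
  exact ⟨hf.meas.add hg.meas, M + N, fun y => (abs_add_le _ _).trans (add_le_add (hM y) (hN y))⟩

lemma BM.const_mul {f : α → ℝ} (hf : BM f) (c : ℝ) : BM (fun y => c * f y) := by
  obtain ⟨M, hM⟩ := hf.bdd
  refine ⟨hf.meas.const_mul c, |c| * M, fun y => ?_⟩
  rw [abs_mul]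
  exact mul_le_mul_of_nonneg_left (hM y) (abs_nonneg _)

lemma BM.sub {f g : α → ℝ} (hf : BM f) (hg : BM g) : BM (fun y => f y - g y) := by
  simpa [sub_eq_add_neg] using hf.add (hg.const_mul (-1))

lemma BM.comp {β : Type} [MeasurableSpace β] {f : α → ℝ} (hf : BM f) {g : β → α}
    (hg : Measurable g) : BM (fun y => f (g y)) := by
  obtain ⟨M, hM⟩ := hf.bdd
  exact ⟨hf.meas.comp hg, M, fun y => hM _⟩

lemma BM.integrable {f : α → ℝ} (hf : BM f) (μ : Measure α) [IsFiniteMeasure μ] :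
    Integrable f μ := by
  obtain ⟨M, hM⟩ := hf.bdd
  exact Integrable.of_bound hf.meas.aestronglyMeasurable M (Filter.Eventually.of_forall hM)

/-- Functional monotone class principle: a property of bounded measurable functions which holds
for indicators and is stable under linear combinations and bounded pointwise limits holds for
all of them. -/
lemma BM.induction {P : (α → ℝ) → Prop}
    (hind : ∀ A, MeasurableSet A → P (A.indicator fun _ => (1 : ℝ)))
    (hadd : ∀ f g, BM f → BM g → P f → P g → P (fun y => f y + g y))
    (hsmul : ∀ (c : ℝ) f, BM f → P f → P (fun y => c * f y))
    (hlim : ∀ (F : ℕ → α → ℝ) f M, (∀ n, BM (F n)) → BM f → (∀ n y, |F n y| ≤ M) →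
      (∀ y, Tendsto (fun n => F n y) atTop (𝓝 (f y))) → (∀ n, P (F n)) → P f)
    {f : α → ℝ} (hf : BM f) : P f := by
  have hsimple : ∀ φ : SimpleFunc α ℝ, BM φ ∧ P φ := by
    intro φ
    induction φ using SimpleFunc.induction with
    | const c hs =>
      rename_i s
      have h1 : (⇑((SimpleFunc.const α c).piecewise s hs (SimpleFunc.const α 0)))
          = fun y => c * s.indicator (fun _ => (1 : ℝ)) y := by
        ext y
        by_cases h : y ∈ s <;> simp [h]
      rw [h1]
      exact ⟨(BM.indicator_one hs).const_mul c, hsmul _ _ (BM.indicator_one hs) (hind s hs)⟩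
    | add hd h1 h2 => exact ⟨h1.1.add h2.1, hadd _ _ h1.1 h2.1 h1.2 h2.2⟩
  obtain ⟨M, hM⟩ := hf.bdd
  have hsm : StronglyMeasurable f := hf.meas.stronglyMeasurable
  refine hlim (fun n => hsm.approxBounded (max M 0) n) f (max M 0) (fun n => (hsimple _).1) hf
    (fun n y => hsm.norm_approxBounded_le (le_max_right _ _) n y)
    (fun y => hsm.tendsto_approxBounded_of_norm_le ((hM y).trans (le_max_left _ _)))
    (fun n => (hsimple _).2)

instance (s : SignedMeasure α) : IsFiniteMeasure s.totalVariation := by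
  unfold SignedMeasure.totalVariation; infer_instance

lemma smInt_indicator (s : SignedMeasure α) {A : Set α} (hA : MeasurableSet A) :
    smInt s (A.indicator fun _ => (1 : ℝ)) = s A := by
  rw [s.apply_eq_posPart_real_sub_negPart_real hA, smInt, integral_indicator hA,
    integral_indicator hA]
  simp [Measure.real]

lemma smInt_add (s : SignedMeasure α) {f g : α → ℝ} (hf : BM f) (hg : BM g) :
    smInt s (fun y => f y + g y) = smInt s f + smInt s g := by
  unfold smInt
  rw [integral_add (hf.integrable _) (hg.integrable _),
    integral_add (hf.integrable _) (hg.integrable _)]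
  ring

lemma smInt_const_mul (s : SignedMeasure α) (f : α → ℝ) (c : ℝ) :
    smInt s (fun y => c * f y) = c * smInt s f := by
  unfold smInt
  rw [integral_const_mul, integral_const_mul]
  ring

lemma smInt_sub (s : SignedMeasure α) {f g : α → ℝ} (hf : BM f) (hg : BM g) :
    smInt s (fun y => f y - g y) = smInt s f - smInt s g := by
  unfold smInt
  rw [integral_sub (hf.integrable _) (hg.integrable _),
    integral_sub (hf.integrable _) (hg.integrable _)]
  ring

lemma smInt_tendsto {ι : Type} {l : Filter ι} [l.IsCountablyGenerated] (s : SignedMeasure α)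
    {F : ι → α → ℝ} {f : α → ℝ} {M : ℝ} (hF : ∀ n, BM (F n)) (hM : ∀ n y, |F n y| ≤ M)
    (hlim : ∀ y, Tendsto (fun n => F n y) l (𝓝 (f y))) :
    Tendsto (fun n => smInt s (F n)) l (𝓝 (smInt s f)) := by
  unfold smInt
  refine Tendsto.sub ?_ ?_ <;>
  exact tendsto_integral_filter_of_dominated_convergence (fun _ => M)
    (Filter.Eventually.of_forall fun n => (hF n).meas.aestronglyMeasurable)
    (Filter.Eventually.of_forall fun n => Filter.Eventually.of_forall (hM n))
    (integrable_const _) (Filter.Eventually.of_forall hlim)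

lemma abs_smInt_le_integral (s : SignedMeasure α) {f : α → ℝ} (hf : BM f) :
    |smInt s f| ≤ ∫ y, |f y| ∂s.totalVariation := by
  unfold smInt SignedMeasure.totalVariation
  rw [integral_add_measure (hf.integrable _).abs (hf.integrable _).abs]
  exact (abs_sub _ _).trans (add_le_add abs_integral_le_integral_abs abs_integral_le_integral_abs)

lemma abs_smInt_le (s : SignedMeasure α) {f : α → ℝ} {M : ℝ} (hf : BM f)
    (hM : ∀ y, |f y| ≤ M) : |smInt s f| ≤ M * tvNorm s := by
  refine (abs_smInt_le_integral s hf).trans ?_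
  calc ∫ y, |f y| ∂s.totalVariation ≤ ∫ _, M ∂s.totalVariation :=
        integral_mono (hf.integrable _).abs (integrable_const _) hM
    _ = M * tvNorm s := by simp [tvNorm, Measure.real, mul_comm]

/-- Hahn decomposition, in terms of the total variation measure. -/
lemma exists_hahn (s : SignedMeasure α) : ∃ P, MeasurableSet P ∧ ∀ A, MeasurableSet A →
    s.totalVariation.real A = s (A ∩ P) - s (A ∩ Pᶜ) := by
  obtain ⟨P, hP, h1, h2⟩ := s.toJordanDecomposition.mutuallySingular
  refine ⟨Pᶜ, hP.compl, fun A hA => ?_⟩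
  rw [compl_compl, s.apply_eq_posPart_real_sub_negPart_real (hA.inter hP),
    s.apply_eq_posPart_real_sub_negPart_real (hA.inter hP.compl), SignedMeasure.totalVariation,
    measureReal_add_apply,
    ← measureReal_inter_add_sdiff (μ := s.toJordanDecomposition.posPart) (s := A) hP,
    ← measureReal_inter_add_sdiff (μ := s.toJordanDecomposition.negPart) (s := A) hP]
  have e1 : s.toJordanDecomposition.posPart.real (A ∩ P) = 0 := by
    rw [Measure.real, measure_mono_null Set.inter_subset_right h1]; rfl
  have e2 : s.toJordanDecomposition.negPart.real (A ∩ Pᶜ) = 0 := by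
    rw [Measure.real, measure_mono_null Set.inter_subset_right h2]; rfl
  rw [Set.sdiff_eq, e1, e2]
  ring

/-- By the Hahn decomposition, the total variation norm is attained as some `s A - s Aᶜ`. -/
lemma tvNorm_le {s : SignedMeasure α} {C : ℝ}
    (h : ∀ A, MeasurableSet A → s A - s Aᶜ ≤ C) : tvNorm s ≤ C := by
  obtain ⟨P, hP, hs⟩ := exists_hahn s
  have := hs _ MeasurableSet.univ
  rw [Set.univ_inter, Set.univ_inter] at this
  exact (this.trans_le (h P hP) :)

lemma abs_apply_sub_le (s : SignedMeasure α) {A : Set α} (hA : MeasurableSet A) :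
    |s A - s Aᶜ| ≤ tvNorm s := by
  rw [← smInt_indicator s hA, ← smInt_indicator s hA.compl,
    ← smInt_sub s (.indicator_one hA) (.indicator_one hA.compl)]
  refine (abs_smInt_le s (M := 1) ((BM.indicator_one hA).sub (.indicator_one hA.compl)) ?_).trans
    (one_mul _).le
  intro y
  by_cases h : y ∈ A <;> simp [h]

lemma abs_apply_le_tv (s : SignedMeasure α) {A : Set α} (hA : MeasurableSet A) :
    |s A| ≤ s.totalVariation.real A := by
  rw [← smInt_indicator s hA]
  refine (abs_smInt_le_integral s (.indicator_one hA)).trans (le_of_eq ?_)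
  have : (fun y => |A.indicator (fun _ => (1 : ℝ)) y|) = A.indicator fun _ => (1 : ℝ) := by
    ext y; by_cases h : y ∈ A <;> simp [h]
  rw [this, integral_indicator hA]
  simp

lemma tvNorm_nonneg (s : SignedMeasure α) : 0 ≤ tvNorm s := ENNReal.toReal_nonneg

lemma abs_apply_le (s : SignedMeasure α) {A : Set α} (hA : MeasurableSet A) :
    |s A| ≤ tvNorm s :=
  (abs_apply_le_tv s hA).trans (measureReal_mono (Set.subset_univ A))

/-- A functional with the formal properties of the integral, and which agrees with `s` on sets,
is the integral against `s`. -/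
lemma smInt_unique (s : SignedMeasure α) (L : (α → ℝ) → ℝ)
    (hind : ∀ A, MeasurableSet A → L (A.indicator fun _ => (1 : ℝ)) = s A)
    (hadd : ∀ f g, BM f → BM g → L (fun y => f y + g y) = L f + L g)
    (hsmul : ∀ (c : ℝ) f, BM f → L (fun y => c * f y) = c * L f)
    (hlim : ∀ (F : ℕ → α → ℝ) f M, (∀ n, BM (F n)) → BM f → (∀ n y, |F n y| ≤ M) →
      (∀ y, Tendsto (fun n => F n y) atTop (𝓝 (f y))) →
      Tendsto (fun n => L (F n)) atTop (𝓝 (L f)))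
    {f : α → ℝ} (hf : BM f) : smInt s f = L f := by
  refine BM.induction (P := fun f => smInt s f = L f) ?_ ?_ ?_ ?_ hf
  · intro A hA
    rw [smInt_indicator s hA, hind A hA]
  · intro f g hf hg h1 h2
    rw [smInt_add s hf hg, hadd f g hf hg, h1, h2]
  · intro c f hf h
    rw [smInt_const_mul, hsmul c f hf, h]
  · intro F f M hF hf hM ht h
    refine tendsto_nhds_unique (smInt_tendsto s hF hM ht) ?_
    simp_rw [h]
    exact hlim F f M hF hf hM ht

lemma smInt_map {β : Type} [MeasurableSpace β] (s : SignedMeasure α) {g : α → β}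
    (hg : Measurable g) {f : β → ℝ} (hf : BM f) :
    smInt (s.map g) f = smInt s (fun y => f (g y)) := by
  refine smInt_unique _ (fun f => smInt s (fun y => f (g y))) ?_ ?_ ?_ ?_ hf
  · intro A hA
    rw [VectorMeasure.map_apply _ hg hA, ← smInt_indicator s (hg hA)]
    rfl
  · exact fun f k hf hk => smInt_add s (hf.comp hg) (hk.comp hg)
  · exact fun c f hf => smInt_const_mul s _ c
  · exact fun F f M hF hf hM ht => smInt_tendsto s (fun n => (hF n).comp hg)
      (fun n y => hM n _) (fun y => ht _)

lemma smInt_smul_sum {ι : Type} (S : Finset ι) (c : ℝ) (s : ι → SignedMeasure α) {f : α → ℝ}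
    (hf : BM f) : smInt (c • ∑ i ∈ S, s i) f = c * ∑ i ∈ S, smInt (s i) f := by
  refine smInt_unique _ (fun f => c * ∑ i ∈ S, smInt (s i) f) ?_ ?_ ?_ ?_ hf
  · intro A hA
    have : (∑ i ∈ S, s i) A = ∑ i ∈ S, s i A := by
      rw [← FunLike.coeAddMonoidHom_apply, map_sum, Finset.sum_apply]; rfl
    simp only [smInt_indicator _ hA, FunLike.coe_smul, Pi.smul_apply, smul_eq_mul, this]
  · intro f g hf hg
    simp only [smInt_add _ hf hg, Finset.sum_add_distrib, mul_add]
  · intro a f hf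
    simp only [smInt_const_mul, ← Finset.mul_sum]
    ring
  · intro F f M hF hf hM ht
    exact (tendsto_finsetSum _ fun i _ => smInt_tendsto _ hF hM ht).const_mul _

lemma withDensity_bound {μ : Measure α} {g : α → ℝ} (hg : Integrable g μ) :
    tvNorm (μ.withDensityᵥ g) ≤ ∫ y, |g y| ∂μ := by
  refine tvNorm_le fun A hA => ?_
  rw [withDensityᵥ_apply hg hA, withDensityᵥ_apply hg hA.compl,
    ← integral_add_compl hA hg.abs, sub_eq_add_neg]
  exact add_le_add ((le_abs_self _).trans abs_integral_le_integral_abs)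
    ((neg_le_abs _).trans abs_integral_le_integral_abs)

lemma smInt_withDensity {μ : Measure α} {g : α → ℝ} (hg : Integrable g μ) {f : α → ℝ}
    (hf : BM f) : smInt (μ.withDensityᵥ g) f = ∫ y, g y * f y ∂μ := by
  have hi : ∀ f, BM f → Integrable (fun y => g y * f y) μ := fun f hf => by
    obtain ⟨M, hM⟩ := hf.bdd
    exact hg.mul_bdd (c := M) hf.meas.aestronglyMeasurable (Filter.Eventually.of_forall hM)
  refine smInt_unique _ (fun f => ∫ y, g y * f y ∂μ) ?_ ?_ ?_ ?_ hf
  · intro A hA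
    rw [withDensityᵥ_apply hg hA, ← integral_indicator hA]
    congr 1
    ext y
    by_cases h : y ∈ A <;> simp [h]
  · intro f k hf hk
    simp only [mul_add]
    exact integral_add (hi f hf) (hi k hk)
  · intro c f hf
    simp only [mul_left_comm _ c]
    exact integral_const_mul _ _
  · intro F f M hF hf hM ht
    refine tendsto_integral_of_dominated_convergence (fun y => |g y| * M)
      (fun n => (hi _ (hF n)).aestronglyMeasurable) (hg.abs.mul_const M)
      (fun n => Filter.Eventually.of_forall fun y => ?_)
      (Filter.Eventually.of_forall fun y => (ht y).const_mul _)
    rw [Real.norm_eq_abs, abs_mul]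
    exact mul_le_mul_of_nonneg_left (hM n y) (abs_nonneg _)

end Basic

/-! ### The Vitali–Hahn–Saks theorem -/

section VitaliHahnSaks

variable {α : Type} [MeasurableSpace α]

open scoped symmDiff

/-- The measurable sets form a complete space for the distance `μ (A ∆ B)`: a sequence whose
consecutive distances are summable converges to its limit superior. -/
instance measuredSets_complete (μ : Measure α) [IsFiniteMeasure μ] :
    CompleteSpace (MeasuredSets μ) := by
  refine EMetric.complete_of_convergent_controlled_sequences (fun n => (2⁻¹ : ENNReal) ^ n)
    (fun n => ENNReal.pow_pos (by simp) n) fun u hu => ?_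
  have hmeas : ∀ n, MeasurableSet (u n : Set α) := fun n => (u n).2
  have hd : ∀ n, μ ((u n : Set α) ∆ (u (n + 1))) ≤ 2⁻¹ ^ n :=
    fun n => (hu n n (n + 1) le_rfl (Nat.le_succ n)).le
  let x : MeasuredSets μ := ⟨⋂ N, ⋃ n, (u (N + n) : Set α),
    MeasurableSet.iInter fun N => MeasurableSet.iUnion fun n => hmeas _⟩
  refine ⟨x, ?_⟩
  -- Off the tail `⋃ n ≥ N, u n ∆ u (n + 1)`, membership in `u n` is constant for `n ≥ N`.
  have hsub : ∀ N, ((u N : Set α) ∆ (x : Set α)) ⊆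
      ⋃ n, (u (N + n) : Set α) ∆ (u (N + n + 1)) := by
    intro N a ha
    by_contra hcon
    have hstep : ∀ n, (a ∈ (u (N + n) : Set α) ↔ a ∈ (u (N + n + 1) : Set α)) := by
      intro n
      have : a ∉ (u (N + n) : Set α) ∆ (u (N + n + 1)) := fun h => hcon (Set.mem_iUnion.2 ⟨n, h⟩)
      rw [Set.mem_symmDiff] at this
      tauto
    have hall : ∀ n, (a ∈ (u (N + n) : Set α) ↔ a ∈ (u N : Set α)) := by
      intro n
      induction n with
      | zero => rfl
      | succ n ih => rw [← ih, hstep n]; rfl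
    have hx : a ∈ (x : Set α) ↔ a ∈ (u N : Set α) := by
      change a ∈ ⋂ N, ⋃ n, (u (N + n) : Set α) ↔ _
      simp only [Set.mem_iInter, Set.mem_iUnion]
      constructor
      · intro h
        obtain ⟨n, hn⟩ := h N
        exact (hall n).1 hn
      · intro h K
        refine ⟨N, ?_⟩
        rw [add_comm]
        exact (hall K).2 h
    rw [Set.mem_symmDiff] at ha
    tauto
  have hle : ∀ N, edist (u N) x ≤ 2⁻¹ ^ N * 2 := by
    intro N
    rw [MeasuredSets.edist_def]
    refine (measure_mono (hsub N)).trans ((measure_iUnion_le _).trans ?_)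
    refine (ENNReal.tsum_le_tsum fun n => hd (N + n)).trans ?_
    simp_rw [pow_add, ENNReal.tsum_mul_left]
    rw [ENNReal.tsum_geometric, ENNReal.one_sub_inv_two, inv_inv]
  rw [tendsto_iff_edist_tendsto_0]
  refine tendsto_of_tendsto_of_tendsto_of_le_of_le tendsto_const_nhds ?_ (fun _ => zero_le) hle
  have := ENNReal.Tendsto.mul_const (b := 2)
    (ENNReal.tendsto_pow_atTop_nhds_zero_of_lt_one (r := 2⁻¹) (by simp)) (Or.inr (by simp))
  simpa using this

/-- **Vitali–Hahn–Saks theorem**, for setwise null sequences: the total variations are uniformly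
absolutely continuous with respect to some finite measure. The proof applies the Baire category
theorem on the complete space of measurable sets. -/
lemma vitali_hahn_saks (t : ℕ → SignedMeasure α) {T : ℝ} (hT : ∀ n, tvNorm (t n) ≤ T)
    (ht : ∀ A, MeasurableSet A → Tendsto (fun n => t n A) atTop (𝓝 0)) :
    ∃ μ : Measure α, IsFiniteMeasure μ ∧ ∀ ε > 0, ∃ δ > 0, ∀ A, MeasurableSet A →
      μ.real A < δ → ∀ n, (t n).totalVariation.real A ≤ ε := by
  -- The weights make `μ` finite, while every `(t n).totalVariation` is dominated by `2 ^ n • μ`.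
  let μ : Measure α := Measure.sum fun n => (2⁻¹ : ENNReal) ^ n • (t n).totalVariation
  have hμ : IsFiniteMeasure μ := by
    refine ⟨?_⟩
    rw [Measure.sum_apply _ MeasurableSet.univ]
    have : ∀ n, ((2⁻¹ : ENNReal) ^ n • (t n).totalVariation) Set.univ
        ≤ 2⁻¹ ^ n * ENNReal.ofReal T := by
      intro n
      rw [Measure.smul_apply, smul_eq_mul]
      gcongr
      exact (ENNReal.le_ofReal_iff_toReal_le (measure_ne_top _ _)
        ((tvNorm_nonneg _).trans (hT n))).2 (hT n)
    refine (ENNReal.tsum_le_tsum this).trans_lt ?_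
    rw [ENNReal.tsum_mul_right, ENNReal.tsum_geometric, ENNReal.one_sub_inv_two, inv_inv]
    exact ENNReal.mul_lt_top (by simp) (by simp)
  have hdom : ∀ n A, MeasurableSet A → (t n).totalVariation.real A ≤ 2 ^ n * μ.real A := by
    intro n A hA
    have h1 : (2⁻¹ : ENNReal) ^ n * (t n).totalVariation A ≤ μ A := by
      rw [Measure.sum_apply _ hA]
      exact ENNReal.le_tsum (f := fun n => ((2⁻¹ : ENNReal) ^ n • (t n).totalVariation) A) n
    have h2 := ENNReal.toReal_mono (measure_ne_top _ _) h1
    rw [ENNReal.toReal_mul, ENNReal.toReal_pow, ENNReal.toReal_inv] at h2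
    rw [← inv_mul_le_iff₀ (by positivity), ← inv_pow]
    simpa [Measure.real] using h2
  refine ⟨μ, hμ, fun ε hε => ?_⟩
  -- On the space of measurable sets with distance `μ (A ∆ B)`, each `t n` is Lipschitz.
  have hlip : ∀ n (A B : MeasuredSets μ), |t n A - t n B| ≤ 2 ^ n * dist A B := by
    intro n A B
    have hA : MeasurableSet (A : Set α) := A.2
    have hB : MeasurableSet (B : Set α) := B.2
    have e : t n A - t n B = smInt (t n) (fun y => (A : Set α).indicator (fun _ => (1 : ℝ)) y
        - (B : Set α).indicator (fun _ => (1 : ℝ)) y) := by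
      rw [smInt_sub _ (.indicator_one hA) (.indicator_one hB), smInt_indicator _ hA,
        smInt_indicator _ hB]
    rw [e, MeasuredSets.dist_def]
    refine (abs_smInt_le_integral _ ((BM.indicator_one hA).sub (.indicator_one hB))).trans ?_
    refine le_trans (le_of_eq ?_) (hdom n _ (hA.symmDiff hB))
    rw [← integral_indicator_one (hA.symmDiff hB)]
    congr 1
    ext y
    by_cases h1 : y ∈ (A : Set α) <;> by_cases h2 : y ∈ (B : Set α) <;>
      simp [h1, h2, Set.mem_symmDiff, Set.indicator]
  have hcont : ∀ n, Continuous fun A : MeasuredSets μ => t n A := by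
    intro n
    refine (LipschitzWith.of_dist_le_mul (K := 2 ^ n) fun A B => ?_).continuous
    rw [Real.dist_eq]
    simpa using hlip n A B
  let F : ℕ → Set (MeasuredSets μ) := fun N => {A | ∀ n ≥ N, |t n A| ≤ ε / 4}
  have hFc : ∀ N, IsClosed (F N) := by
    intro N
    have : F N = ⋂ n, ⋂ (_ : n ≥ N), {A : MeasuredSets μ | |t n A| ≤ ε / 4} := by
      ext A; simp [F]
    rw [this]
    exact isClosed_iInter fun n => isClosed_iInter fun _ =>
      isClosed_le (hcont n).abs continuous_const
  have hFu : ⋃ N, F N = Set.univ := by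
    refine Set.eq_univ_of_forall fun A => Set.mem_iUnion.2 ?_
    have := (ht A A.2).abs.eventually (eventually_lt_nhds
        (show |(0 : ℝ)| < ε / 4 by rw [abs_zero]; positivity))
    obtain ⟨N, hN⟩ := eventually_atTop.1 this
    exact ⟨N, fun n hn => (hN n hn).le⟩
  have : Nonempty (MeasuredSets μ) := ⟨⟨∅, MeasurableSet.empty⟩⟩
  obtain ⟨N, A₀, hA₀⟩ := nonempty_interior_of_iUnion_of_closed hFc hFu
  obtain ⟨r, hr, hball⟩ := Metric.isOpen_iff.1 isOpen_interior A₀ hA₀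
  have hA₀m : MeasurableSet (A₀ : Set α) := A₀.2
  -- `A₀ ∪ E` and `A₀ \ E` both lie in the ball around `A₀`, and differ by `E`.
  have hsmall : ∀ E, MeasurableSet E → μ.real E < r → ∀ n ≥ N, |t n E| ≤ ε / 2 := by
    intro E hE hEr n hn
    have h1 : |t n ((A₀ : Set α) ∪ E)| ≤ ε / 4 := by
      let X : MeasuredSets μ := ⟨(A₀ : Set α) ∪ E, hA₀m.union hE⟩
      have : X ∈ F N := by
        refine interior_subset (hball ?_)
        rw [Metric.mem_ball, MeasuredSets.dist_def]
        refine lt_of_le_of_lt (measureReal_mono ?_) hEr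
        intro a ha
        rcases ha with ⟨h1 | h1, h2⟩ | ⟨h1, h2⟩
        · exact absurd h1 h2
        · exact h1
        · exact absurd (Or.inl h1) h2
      exact this n hn
    have h2 : |t n ((A₀ : Set α) \ E)| ≤ ε / 4 := by
      let X : MeasuredSets μ := ⟨(A₀ : Set α) \ E, hA₀m.diff hE⟩
      have : X ∈ F N := by
        refine interior_subset (hball ?_)
        rw [Metric.mem_ball, MeasuredSets.dist_def]
        refine lt_of_le_of_lt (measureReal_mono ?_) hEr
        intro a ha
        rcases ha with ⟨h1, h2⟩ | ⟨h1, h2⟩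
        · exact absurd h1.1 h2
        · by_contra h3
          exact h2 ⟨h1, h3⟩
      exact this n hn
    have h3 : t n ((A₀ : Set α) ∪ E) = t n ((A₀ : Set α) \ E) + t n E := by
      rw [← VectorMeasure.of_union Set.disjoint_sdiff_left (hA₀m.diff hE) hE,
        Set.sdiff_union_self]
    rw [abs_le] at *
    constructor <;> linarith
  have htv : ∀ E, MeasurableSet E → μ.real E < r → ∀ n ≥ N,
      (t n).totalVariation.real E ≤ ε := by
    intro E hE hEr n hn
    obtain ⟨P, hP, hs⟩ := exists_hahn (t n)
    rw [hs E hE]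
    have h1 := hsmall (E ∩ P) (hE.inter hP)
      ((measureReal_mono Set.inter_subset_left).trans_lt hEr) n hn
    have h2 := hsmall (E ∩ Pᶜ) (hE.inter hP.compl)
      ((measureReal_mono Set.inter_subset_left).trans_lt hEr) n hn
    rw [abs_le] at *
    linarith
  -- The bound `ε / 2 ^ N` takes care of the finitely many indices `n ≤ N`, through `hdom`.
  refine ⟨min r (ε / 2 ^ N), lt_min hr (by positivity), fun A hA hlt n => ?_⟩
  rcases le_total N n with hn | hn
  · exact htv A hA (hlt.trans_le (min_le_left _ _)) n hn
  · refine (hdom n A hA).trans ?_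
    have h1 : μ.real A ≤ ε / 2 ^ N := (hlt.trans_le (min_le_right _ _)).le
    calc (2 : ℝ) ^ n * μ.real A ≤ 2 ^ N * (ε / 2 ^ N) := by
          gcongr
          norm_num
      _ = ε := by field_simp

/-- Under setwise convergence to zero, bounded pointwise null sequences are integrated to zero
uniformly with respect to the measures. -/
lemma smInt_unif (t : ℕ → SignedMeasure α) {T : ℝ} (hT : ∀ n, tvNorm (t n) ≤ T)
    (ht : ∀ A, MeasurableSet A → Tendsto (fun n => t n A) atTop (𝓝 0))
    {g : ℕ → α → ℝ} {M : ℝ} (hg : ∀ k, BM (g k)) (hM : ∀ k y, |g k y| ≤ M)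
    (hlim : ∀ y, Tendsto (fun k => g k y) atTop (𝓝 0)) {ε : ℝ} (hε : 0 < ε) :
    ∀ᶠ k in atTop, ∀ n, |smInt (t n) (g k)| ≤ ε := by
  obtain ⟨μ, hμ, hac⟩ := vitali_hahn_saks t hT ht
  have hT0 : 0 ≤ T := (tvNorm_nonneg _).trans (hT 0)
  set η : ℝ := ε / (2 * (T + 1)) with hη
  have hη0 : 0 < η := by positivity
  obtain ⟨δ, hδ, hδ'⟩ := hac (ε / (2 * (|M| + 1))) (by positivity)
  have hmeas : TendstoInMeasure μ g atTop 0 :=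
    tendstoInMeasure_of_tendsto_ae (fun k => (hg k).meas.aestronglyMeasurable)
      (Filter.Eventually.of_forall hlim)
  have h1 := (tendstoInMeasure_iff_measureReal_norm.1 hmeas η hη0).eventually
    (eventually_lt_nhds hδ)
  filter_upwards [h1] with k hk n
  -- Split the integral along the set `E` where `g k` is at least `η`; it has small `μ`-measure
  -- because pointwise convergence implies convergence in measure.
  set E := {x | η ≤ ‖g k x - (0 : α → ℝ) x‖} with hE
  have hEm : MeasurableSet E := by
    refine measurableSet_le measurable_const ?_
    simpa using (hg k).meas.norm
  have hEn := hδ' E hEm hk n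
  refine (abs_smInt_le_integral _ (hg k)).trans ?_
  have hb : ∀ y, |g k y| ≤ η + |M| * E.indicator 1 y := by
    intro y
    by_cases hy : y ∈ E
    · have := (hM k y).trans (le_abs_self M)
      simp [hy]; linarith
    · have : |g k y| < η := by simpa [hE] using hy
      simp [hy]; linarith
  have hi : Integrable (fun y => |M| * E.indicator (1 : α → ℝ) y) (t n).totalVariation :=
    ((BM.indicator_one hEm).integrable _).const_mul _
  calc ∫ y, |g k y| ∂(t n).totalVariation
      ≤ ∫ y, (η + |M| * E.indicator 1 y) ∂(t n).totalVariation :=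
        integral_mono ((hg k).integrable _).abs ((integrable_const _).add hi) hb
    _ = η * tvNorm (t n) + |M| * (t n).totalVariation.real E := by
        rw [integral_add (integrable_const _) hi, integral_const_mul,
          integral_indicator_one hEm]
        simp [tvNorm, Measure.real, mul_comm]
    _ ≤ η * (T + 1) + (|M| + 1) * (ε / (2 * (|M| + 1))) := by
        gcongr
        · linarith [hT n]
        · linarith
    _ = ε := by rw [hη]; field_simp; norm_num

/-- If `s n → s₀` setwise with uniformly bounded total variations and `f n → f₀` pointwise and
boundedly, then the integrals converge. -/
lemma smInt_tendsto_setwise (s : ℕ → SignedMeasure α) (s₀ : SignedMeasure α) {T : ℝ}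
    (hT : ∀ n, tvNorm (s n) ≤ T)
    (hs : ∀ A, MeasurableSet A → Tendsto (fun n => s n A) atTop (𝓝 (s₀ A)))
    {f : ℕ → α → ℝ} {f₀ : α → ℝ} {M : ℝ} (hf : ∀ n, BM (f n)) (hf₀ : BM f₀)
    (hM : ∀ n y, |f n y| ≤ M) (hlim : ∀ y, Tendsto (fun n => f n y) atTop (𝓝 (f₀ y))) :
    Tendsto (fun n => smInt (s n) (f n)) atTop (𝓝 (smInt s₀ f₀)) := by
  let t : ℕ → SignedMeasure α := fun n => s n - s₀
  have htap : ∀ n A, t n A = s n A - s₀ A := fun n A => by simp [t]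
  have ht0 : ∀ A, MeasurableSet A → Tendsto (fun n => t n A) atTop (𝓝 0) := fun A hA => by
    simp only [htap]
    simpa using (hs A hA).sub_const (s₀ A)
  have htT : ∀ n, tvNorm (t n) ≤ T + tvNorm s₀ := fun n => tvNorm_le fun A hA => by
    have h1 := (le_abs_self _).trans ((abs_apply_sub_le (s n) hA).trans (hT n))
    have h2 := (neg_le_abs _).trans (abs_apply_sub_le s₀ hA)
    rw [htap, htap]
    linarith
  have hsub : ∀ n f, BM f → smInt (t n) f = smInt (s n) f - smInt s₀ f := by
    intro n f hf
    refine smInt_unique _ (fun f => smInt (s n) f - smInt s₀ f) ?_ ?_ ?_ ?_ hf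
    · intro A hA
      rw [smInt_indicator _ hA, smInt_indicator _ hA, htap]
    · intro f g hf hg
      simp only [smInt_add _ hf hg]; ring
    · intro c f hf
      simp only [smInt_const_mul]; ring
    · exact fun F f M hF hf hM ht =>
        (smInt_tendsto _ hF hM ht).sub (smInt_tendsto _ hF hM ht)
  -- Convergence against a fixed bounded measurable function
  have hfix : ∀ f, BM f → Tendsto (fun n => smInt (t n) f) atTop (𝓝 0) := by
    intro f hf
    refine BM.induction (P := fun f => Tendsto (fun n => smInt (t n) f) atTop (𝓝 0))
      ?_ ?_ ?_ ?_ hf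
    · intro A hA
      simpa only [smInt_indicator _ hA] using ht0 A hA
    · intro f g hf hg h1 h2
      simp only [smInt_add _ hf hg]
      simpa using h1.add h2
    · intro c f hf h
      simp only [smInt_const_mul]
      simpa using h.const_mul c
    · intro F f M hF hf hM hl h
      obtain ⟨N, hN⟩ := hf.bdd
      rw [Metric.tendsto_atTop']
      intro ε hε
      have hu := smInt_unif t htT ht0 (g := fun k y => F k y - f y) (M := M + N)
        (fun k => (hF k).sub hf)
        (fun k y => (abs_sub _ _).trans (add_le_add (hM k y) (hN y)))
        (fun y => by simpa using (hl y).sub_const (f y)) (half_pos hε)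
      obtain ⟨k, hk⟩ := hu.exists
      have := (h k).abs.eventually (eventually_lt_nhds
        (show |(0 : ℝ)| < ε / 2 by rw [abs_zero]; positivity))
      obtain ⟨n₀, hn₀⟩ := eventually_atTop.1 this
      refine ⟨n₀, fun n hn => ?_⟩
      have h1 := hk n
      have h2 := hn₀ n hn.le
      rw [smInt_sub _ (hF k) hf] at h1
      rw [Real.dist_eq, sub_zero]
      rw [abs_le] at h1
      rw [abs_lt] at *
      constructor <;> linarith
  obtain ⟨N, hN⟩ := hf₀.bdd
  have hg : ∀ n, BM (fun y => f n y - f₀ y) := fun n => (hf n).sub hf₀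
  have hgM : ∀ n y, |f n y - f₀ y| ≤ M + N :=
    fun n y => (abs_sub _ _).trans (add_le_add (hM n y) (hN y))
  have hdiag : Tendsto (fun n => smInt (t n) (fun y => f n y - f₀ y)) atTop (𝓝 0) := by
    rw [Metric.tendsto_atTop']
    intro ε hε
    have hu := smInt_unif t htT ht0 hg hgM
      (fun y => by simpa using (hlim y).sub_const (f₀ y)) (half_pos hε)
    obtain ⟨n₀, hn₀⟩ := eventually_atTop.1 hu
    refine ⟨n₀, fun n hn => ?_⟩
    rw [Real.dist_eq, sub_zero]
    linarith [hn₀ n hn.le n]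
  have hall := (hdiag.add (hfix f₀ hf₀)).add (smInt_tendsto s₀ hf hM hlim)
  simp only [zero_add] at hall
  refine hall.congr fun n => ?_
  rw [smInt_sub _ (hf n) hf₀, hsub n _ (hf n)]
  ring

end VitaliHahnSaks

/-! ### Composition-products of signed measures and kernels -/

section Kernels

variable {P Y : Type} [MeasurableSpace P] [MeasurableSpace Y]

/-- A measurable family of signed measures on `Y`, indexed by `P`, with uniformly bounded total
variation. -/
structure SKer (P Y : Type) [MeasurableSpace P] [MeasurableSpace Y] where
  /-- the signed measure at a point -/
  ker : P → SignedMeasure Y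
  meas : ∀ A, MeasurableSet A → Measurable fun p => ker p A
  /-- a bound for the total variations -/
  C : ℝ
  bound : ∀ p, tvNorm (ker p) ≤ C

lemma SKer.measurable_section (κ : SKer P Y) {S : Set (P × Y)} (hS : MeasurableSet S) :
    Measurable fun p => κ.ker p (Prod.mk p ⁻¹' S) := by
  induction S, hS using MeasurableSpace.induction_on_inter generateFrom_prod.symm
    isPiSystem_prod with
  | empty => simp
  | basic S hS =>
    obtain ⟨s, hs, t, ht, rfl⟩ := hS
    have : (fun p => κ.ker p (Prod.mk p ⁻¹' (s ×ˢ t)))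
        = s.indicator (fun p => κ.ker p t) := by
      ext p
      by_cases h : p ∈ s <;> simp [h]
    rw [this]
    exact (κ.meas t ht).indicator hs
  | compl S hS ih =>
    have : (fun p => κ.ker p (Prod.mk p ⁻¹' Sᶜ))
        = fun p => κ.ker p Set.univ - κ.ker p (Prod.mk p ⁻¹' S) := by
      ext p
      rw [Set.preimage_compl, VectorMeasure.of_compl (measurable_prodMk_left hS)]
    rw [this]
    exact (κ.meas _ MeasurableSet.univ).sub ih
  | iUnion f hd hf ih =>
    refine measurable_of_tendsto_metrizable
      (f := fun n p => ∑ i ∈ Finset.range n, κ.ker p (Prod.mk p ⁻¹' f i))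
      (fun n => Finset.measurable_sum _ fun i _ => ih i) ?_
    refine tendsto_pi_nhds.2 fun p => ?_
    rw [Set.preimage_iUnion]
    exact ((κ.ker p).m_iUnion (fun i => measurable_prodMk_left (hf i))
      (fun i j hij => (hd hij).preimage _)).tendsto_sum_nat

lemma SKer.abs_apply_le (κ : SKer P Y) (p : P) {A : Set Y} (hA : MeasurableSet A) :
    |κ.ker p A| ≤ κ.C := (_root_.abs_apply_le _ hA).trans (κ.bound p)

lemma SKer.bm_section (κ : SKer P Y) {S : Set (P × Y)} (hS : MeasurableSet S) :
    BM fun p => κ.ker p (Prod.mk p ⁻¹' S) :=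
  ⟨κ.measurable_section hS, κ.C, fun p => κ.abs_apply_le p (measurable_prodMk_left hS)⟩

lemma SKer.bm_smInt (κ : SKer P Y) {f : P × Y → ℝ} (hf : BM f) :
    BM fun p => smInt (κ.ker p) fun y => f (p, y) := by
  constructor
  · refine BM.induction (P := fun f : P × Y → ℝ =>
      Measurable fun p => smInt (κ.ker p) fun y => f (p, y)) ?_ ?_ ?_ ?_ hf
    · intro A hA
      convert κ.measurable_section hA using 1
      ext p
      exact smInt_indicator _ (measurable_prodMk_left hA)
    · intro f g hf hg h1 h2
      convert h1.add h2 using 1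
      ext p
      exact smInt_add _ (hf.comp measurable_prodMk_left) (hg.comp measurable_prodMk_left)
    · intro c f hf h
      convert h.const_mul c using 1
      ext p
      exact smInt_const_mul _ _ _
    · intro F f M hF hf hM ht h
      exact measurable_of_tendsto_metrizable h (tendsto_pi_nhds.2 fun p =>
        smInt_tendsto _ (fun n => (hF n).comp measurable_prodMk_left) (fun n y => hM n _)
          (fun y => ht _))
  · obtain ⟨M, hM⟩ := hf.bdd
    refine ⟨|M| * κ.C, fun p => (abs_smInt_le _ (hf.comp measurable_prodMk_left)
      (fun y => (hM (p, y)).trans (le_abs_self M))).trans ?_⟩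
    exact mul_le_mul_of_nonneg_left (κ.bound p) (abs_nonneg _)

open Classical in
/-- The composition-product `σ(dp) κ(p; dy)` of a signed measure and a signed kernel. -/
def compProd (σ : SignedMeasure P) (κ : SKer P Y) : SignedMeasure (P × Y) where
  measureOf' S := if MeasurableSet S then smInt σ fun p => κ.ker p (Prod.mk p ⁻¹' S) else 0
  empty' := by simp [smInt]
  not_measurable' S hS := by simp [hS]
  m_iUnion' f hf hd := by
    simp only [hf, MeasurableSet.iUnion hf, if_true]
    have key : ∀ F : Finset ℕ, (fun p => ∑ i ∈ F, κ.ker p (Prod.mk p ⁻¹' f i))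
        = fun p => κ.ker p (Prod.mk p ⁻¹' ⋃ i ∈ F, f i) := by
      intro F
      ext p
      rw [Set.preimage_iUnion₂]
      exact ((κ.ker p).of_biUnion_finset (fun i _ j _ hij => (hd hij).preimage _)
        (fun i _ => measurable_prodMk_left (hf i))).symm
    have hm : ∀ F : Finset ℕ, MeasurableSet (⋃ i ∈ F, f i) :=
      fun F => Finset.measurableSet_biUnion _ fun i _ => hf i
    have hsum : ∀ F : Finset ℕ, ∑ i ∈ F, smInt σ (fun p => κ.ker p (Prod.mk p ⁻¹' f i))
        = smInt σ (fun p => κ.ker p (Prod.mk p ⁻¹' ⋃ i ∈ F, f i)) := by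
      intro F
      rw [← key]
      induction F using Finset.induction_on with
      | empty => simp [smInt]
      | insert a F ha ih =>
        simp only [Finset.sum_insert ha]
        rw [smInt_add _ (κ.bm_section (hf a)) (by rw [key]; exact κ.bm_section (hm F)), ih]
    unfold HasSum
    simp only [hsum]
    refine smInt_tendsto σ (M := κ.C) (fun F => κ.bm_section (hm F))
      (fun F p => κ.abs_apply_le p (measurable_prodMk_left (hm F))) fun p => ?_
    rw [Set.preimage_iUnion]
    have := (κ.ker p).m_iUnion (fun i => measurable_prodMk_left (x := p) (hf i))
      (fun i j hij => (hd hij).preimage _)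
    refine Tendsto.congr (fun F => congrFun (key F) p) this

lemma compProd_apply (σ : SignedMeasure P) (κ : SKer P Y) {S : Set (P × Y)}
    (hS : MeasurableSet S) :
    compProd σ κ S = smInt σ fun p => κ.ker p (Prod.mk p ⁻¹' S) := by
  classical
  change (if MeasurableSet S then _ else _) = _
  rw [if_pos hS]

/-- Fubini's theorem for composition-products. -/
lemma smInt_compProd (σ : SignedMeasure P) (κ : SKer P Y) {f : P × Y → ℝ} (hf : BM f) :
    smInt (compProd σ κ) f = smInt σ fun p => smInt (κ.ker p) fun y => f (p, y) := by
  refine smInt_unique _ (fun f => smInt σ fun p => smInt (κ.ker p) fun y => f (p, y))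
    ?_ ?_ ?_ ?_ hf
  · intro A hA
    rw [compProd_apply σ κ hA]
    congr 1
    ext p
    exact smInt_indicator _ (measurable_prodMk_left hA)
  · intro f g hf hg
    rw [← smInt_add σ (κ.bm_smInt hf) (κ.bm_smInt hg)]
    congr 1
    ext p
    exact smInt_add _ (hf.comp measurable_prodMk_left) (hg.comp measurable_prodMk_left)
  · intro c f hf
    simp only [smInt_const_mul]
  · intro F f M hF hf hM ht
    refine smInt_tendsto σ (M := |M| * κ.C) (fun n => κ.bm_smInt (hF n)) (fun n p => ?_)
      fun p => smInt_tendsto _ (fun n => (hF n).comp measurable_prodMk_left) (fun n y => hM n _)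
        (fun y => ht _)
    exact (abs_smInt_le _ ((hF n).comp measurable_prodMk_left)
      (fun y => (hM n (p, y)).trans (le_abs_self M))).trans
      (mul_le_mul_of_nonneg_left (κ.bound p) (abs_nonneg _))

lemma tvNorm_compProd_le (σ : SignedMeasure P) (κ : SKer P Y) :
    tvNorm (compProd σ κ) ≤ κ.C * tvNorm σ := by
  refine tvNorm_le fun A hA => ?_
  rw [compProd_apply σ κ hA, compProd_apply σ κ hA.compl,
    ← smInt_sub σ (κ.bm_section hA) (κ.bm_section hA.compl)]
  exact (le_abs_self _).trans (abs_smInt_le σ ((κ.bm_section hA).sub (κ.bm_section hA.compl))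
    fun p => (abs_apply_sub_le (κ.ker p) (measurable_prodMk_left hA)).trans (κ.bound p))

lemma tvNorm_map_le (s : SignedMeasure P) {g : P → Y} (hg : Measurable g) :
    tvNorm (s.map g) ≤ tvNorm s := by
  refine tvNorm_le fun A hA => ?_
  rw [VectorMeasure.map_apply _ hg hA, VectorMeasure.map_apply _ hg hA.compl]
  exact (le_abs_self _).trans (abs_apply_sub_le s (hg hA))

end Kernels

/-! ### The kernel of the bilinear map -/

section Bilinear

variable {d m k : ℕ}

/-- Simultaneous translation `(y₁, …, y_n) ↦ (y₁ - x, …, y_n - x)`. -/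
def shiftPt (d n : ℕ) (x : Vd d) (y : Fin n → Vd d) : Fin n → Vd d := fun j => y j - x

lemma measurable_shiftPt (n : ℕ) (x : Vd d) : Measurable (shiftPt d n x) := by
  unfold shiftPt; fun_prop

lemma measurable_assemble (π : Equiv.Perm (Fin m)) :
    Measurable fun p : (Fin (k + 1) → Vd d) × (Fin (m - k) → Vd d) =>
      assemble d m k π p.1 p.2 := by
  refine measurable_pi_lambda _ fun i => ?_
  unfold assemble
  by_cases h : ((π.symm i : Fin m) : ℕ) < k
  · simp only [h, dif_pos]; fun_prop
  · simp only [h, dif_neg, not_false_iff]; fun_prop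

lemma shiftPt_assemble (π : Equiv.Perm (Fin m)) (x : Vd d) (w : Fin (k + 1) → Vd d)
    (u : Fin (m - k) → Vd d) : shiftPt d m x (assemble d m k π w u)
      = assemble d m k π (shiftPt d _ x w) (shiftPt d _ x u) := by
  ext1 i
  unfold shiftPt assemble
  split_ifs <;> rfl

/-- The kernel `V` centred at its base point: `x ↦ (A ↦ V(x; A + x))`. -/
def cen {n : ℕ} (V : Ker d n) (x : Vd d) : SignedMeasure (Fin n → Vd d) :=
  (V x).map (shiftPt d n x)

lemma cen_apply {n : ℕ} (V : Ker d n) (x : Vd d) {A : Set (Fin n → Vd d)}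
    (hA : MeasurableSet A) : cen V x A = V x (shiftSet d n x A) :=
  VectorMeasure.map_apply _ (measurable_shiftPt n x) hA

lemma IsV.tvNorm_le {n : ℕ} {V : Ker d n} (hV : IsV d n V) (x : Vd d) :
    tvNorm (V x) ≤ vNorm d n V := le_ciSup hV.bdd x

lemma IsV.tvNorm_cen_le {n : ℕ} {V : Ker d n} (hV : IsV d n V) (x : Vd d) :
    tvNorm (cen V x) ≤ vNorm d n V :=
  (tvNorm_map_le _ (measurable_shiftPt n x)).trans (hV.tvNorm_le x)

lemma IsV.continuous_cen {n : ℕ} {V : Ker d n} (hV : IsV d n V) {A : Set (Fin n → Vd d)}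
    (hA : MeasurableSet A) : Continuous fun x => cen V x A := by
  simp only [cen_apply V _ hA]
  exact hV.cont A hA

lemma IsV.cen_periodic {n : ℕ} {V : Ker d n} (hV : IsV d n V) (x : Vd d) (i : Fin d) :
    cen V (x + Pi.single i (2 * Real.pi)) = cen V x := by
  refine VectorMeasure.ext fun A hA => ?_
  rw [cen_apply V _ hA, cen_apply V _ hA, hV.periodic A hA]

/-- The centred measures of `V` as a measurable signed kernel: at `p` it is `cen V (g p)`. The
measurability in `p` comes from the continuity of `x ↦ V(x; A + x)`. -/
def cenKer {n : ℕ} {V : Ker d n} (hV : IsV d n V) {P : Type} [MeasurableSpace P] (g : P → Vd d)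
    (hg : Measurable g) : SKer P (Fin n → Vd d) where
  ker p := cen V (g p)
  meas _ hA := (hV.continuous_cen hA).measurable.comp hg
  C := vNorm d n V
  bound p := hV.tvNorm_cen_le (g p)

/-- `V` itself is a measurable kernel: `V(z; A)` is the mass given by the centred measure at `z` to
the section of `{(z, v) | v + z ∈ A}`. -/
lemma IsV.measurable {n : ℕ} {V : Ker d n} (hV : IsV d n V) {A : Set (Fin n → Vd d)}
    (hA : MeasurableSet A) : Measurable fun z => V z A := by
  have hg : Measurable fun p : Vd d × (Fin n → Vd d) => shiftPt d n (-p.1) p.2 := by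
    unfold shiftPt; fun_prop
  convert (cenKer hV id measurable_id).measurable_section (hg hA) using 1
  ext z
  change V z A = (V z).map (shiftPt d n z) _
  rw [VectorMeasure.map_apply _ (measurable_shiftPt n z) (measurable_prodMk_left (hg hA))]
  congr 1
  ext v
  have h : shiftPt d n (-z) (shiftPt d n z v) = v := by
    ext1 j
    simp [shiftPt]
  change v ∈ A ↔ shiftPt d n (-z) (shiftPt d n z v) ∈ A
  rw [h]

/-- `V` as a measurable signed kernel in the variable `z = g p`. -/
def vKer {n : ℕ} {V : Ker d n} (hV : IsV d n V) {P : Type} [MeasurableSpace P] (g : P → Vd d)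
    (hg : Measurable g) : SKer P (Fin n → Vd d) where
  ker p := V (g p)
  meas _ hA := (hV.measurable hA).comp hg
  C := vNorm d n V
  bound p := hV.tvNorm_le (g p)

variable {G : Vd d → ℝ}

/-- The kernel `G(w₀ - z) dz`. -/
def gKer (hGc : Continuous G) (hGi : Integrable G) (n : ℕ) :
    SKer (Fin (n + 1) → Vd d) (Vd d) where
  ker w := volume.withDensityᵥ fun z => G (w 0 - z)
  meas A hA := by
    have h : (fun w : Fin (n + 1) → Vd d => (volume.withDensityᵥ fun z => G (w 0 - z)) A)
        = fun w => ∫ z in A, G (w 0 - z) := by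
      ext w
      exact withDensityᵥ_apply (hGi.comp_sub_left (w 0)) hA
    rw [h]
    have hc : Continuous fun p : (Fin (n + 1) → Vd d) × Vd d => G (p.1 0 - p.2) := by fun_prop
    exact (hc.stronglyMeasurable.integral_prod_right
      (f := fun (w : Fin (n + 1) → Vd d) z => G (w 0 - z))).measurable
  C := ∫ z, |G z|
  bound w := by
    refine (withDensity_bound (hGi.comp_sub_left (w 0))).trans (le_of_eq ?_)
    exact integral_sub_left_eq_self (fun z => |G z|) volume (w 0)

lemma smInt_gKer (hGc : Continuous G) (hGi : Integrable G) {n : ℕ} (w : Fin (n + 1) → Vd d)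
    {f : Vd d → ℝ} (hf : BM f) :
    smInt ((gKer hGc hGi n).ker w) f = ∫ z, G (w 0 - z) * f z :=
  smInt_withDensity (hGi.comp_sub_left (w 0)) hf

/-- The measure `W(x; dw) G(w₀ - z) dz U(z; du)`. -/
def triple (hGc : Continuous G) (hGi : Integrable G) {W : Ker d (k + 1)} {U : Ker d (m - k)}
    (hU : IsV d (m - k) U) (x : Vd d) :
    SignedMeasure (((Fin (k + 1) → Vd d) × Vd d) × (Fin (m - k) → Vd d)) :=
  compProd (compProd (W x) (gKer hGc hGi k)) (vKer hU Prod.snd measurable_snd)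

lemma smInt_triple (hGc : Continuous G) (hGi : Integrable G) {W : Ker d (k + 1)}
    {U : Ker d (m - k)} (hU : IsV d (m - k) U) (x : Vd d)
    {f : (Fin (k + 1) → Vd d) × (Fin (m - k) → Vd d) → ℝ} (hf : BM f) :
    smInt (triple (W := W) hGc hGi hU x) (fun p => f (p.1.1, p.2))
      = smInt (W x) fun w => ∫ z, G (w 0 - z) * smInt (U z) fun u => f (w, u) := by
  have hf' : BM fun p : ((Fin (k + 1) → Vd d) × Vd d) × (Fin (m - k) → Vd d) =>
    f (p.1.1, p.2) := hf.comp (by fun_prop)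
  have h1 := (vKer hU (Prod.snd (α := Fin (k + 1) → Vd d)) measurable_snd).bm_smInt hf'
  rw [triple, smInt_compProd _ _ hf', smInt_compProd _ _ h1]
  congr 1
  ext w
  exact smInt_gKer hGc hGi w (h1.comp measurable_prodMk_left)

/-- The kernel `B(G, W, U)`: the average over `π` of the images of the measure `triple` under the
reassembly maps. The variable `z` and the first variable of `W` are integrated out. -/
def Bker (hGc : Continuous G) (hGi : Integrable G) (W : Ker d (k + 1)) {U : Ker d (m - k)}
    (hU : IsV d (m - k) U) : Ker d m := fun x =>
  ((Nat.factorial m : ℝ))⁻¹ • ∑ π : Equiv.Perm (Fin m),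
    (triple (W := W) hGc hGi hU x).map fun p => assemble d m k π p.1.1 p.2

lemma measurable_assemble' (π : Equiv.Perm (Fin m)) :
    Measurable fun p : ((Fin (k + 1) → Vd d) × Vd d) × (Fin (m - k) → Vd d) =>
      assemble d m k π p.1.1 p.2 := by
  have hg : Measurable fun p : ((Fin (k + 1) → Vd d) × Vd d) × (Fin (m - k) → Vd d) =>
      (p.1.1, p.2) := by fun_prop
  exact (measurable_assemble π).comp hg

/-- The pairing with `B(G, W, U)`, for all bounded measurable functions. -/
lemma smInt_Bker (hGc : Continuous G) (hGi : Integrable G) (W : Ker d (k + 1))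
    {U : Ker d (m - k)} (hU : IsV d (m - k) U) (x : Vd d) {f : (Fin m → Vd d) → ℝ} (hf : BM f) :
    smInt (Bker hGc hGi W hU x) f = Bweak d m k G W U x f := by
  rw [Bker, smInt_smul_sum _ _ _ hf, Bweak]
  congr 1
  refine Finset.sum_congr rfl fun π _ => ?_
  rw [smInt_map _ (measurable_assemble' π) hf,
    ← smInt_triple hGc hGi hU x (hf.comp (measurable_assemble π))]

/-- Each `triple` has total variation at most `‖G‖ ‖W‖ ‖U‖`, and neither images nor averages
increase the total variation. -/
lemma tvNorm_Bker_le (hGc : Continuous G) (hGi : Integrable G) {W : Ker d (k + 1)}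
    (hW : IsV d (k + 1) W) {U : Ker d (m - k)} (hU : IsV d (m - k) U) (x : Vd d) :
    tvNorm (Bker hGc hGi W hU x) ≤ (∫ z, |G z|) * vNorm d (k + 1) W * vNorm d (m - k) U := by
  set D := (∫ z, |G z|) * vNorm d (k + 1) W * vNorm d (m - k) U with hD
  have hG0 : 0 ≤ ∫ z, |G z| := integral_nonneg fun z => abs_nonneg _
  have hU0 : 0 ≤ vNorm d (m - k) U := (tvNorm_nonneg _).trans (hU.tvNorm_le x)
  have h1 : tvNorm (triple (W := W) hGc hGi hU x) ≤ D := by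
    refine (tvNorm_compProd_le _ _).trans ?_
    calc vNorm d (m - k) U * tvNorm (compProd (W x) (gKer hGc hGi k))
        ≤ vNorm d (m - k) U * ((∫ z, |G z|) * vNorm d (k + 1) W) := by
          gcongr
          refine (tvNorm_compProd_le _ _).trans ?_
          exact mul_le_mul_of_nonneg_left (hW.tvNorm_le x) hG0
      _ = D := by rw [hD]; ring
  refine tvNorm_le fun A hA => ?_
  have hi : BM fun y => A.indicator (fun _ => (1 : ℝ)) y - Aᶜ.indicator (fun _ => (1 : ℝ)) y :=
    (BM.indicator_one hA).sub (.indicator_one hA.compl)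
  rw [← smInt_indicator _ hA, ← smInt_indicator _ hA.compl,
    ← smInt_sub _ (.indicator_one hA) (.indicator_one hA.compl), Bker, smInt_smul_sum _ _ _ hi]
  have hπ : ∀ π : Equiv.Perm (Fin m),
      smInt ((triple (W := W) hGc hGi hU x).map fun p => assemble d m k π p.1.1 p.2)
        (fun y => A.indicator (fun _ => (1 : ℝ)) y - Aᶜ.indicator (fun _ => (1 : ℝ)) y) ≤ D := by
    intro π
    rw [smInt_sub _ (.indicator_one hA) (.indicator_one hA.compl), smInt_indicator _ hA,
      smInt_indicator _ hA.compl]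
    exact (le_abs_self _).trans ((abs_apply_sub_le _ hA).trans
      ((tvNorm_map_le _ (measurable_assemble' π)).trans h1))
  calc _ ≤ ((Nat.factorial m : ℝ))⁻¹ * ∑ _π : Equiv.Perm (Fin m), D := by
        gcongr with π; exact hπ π
    _ = D := by
        have : (Nat.factorial m : ℝ) ≠ 0 := by positivity
        rw [Finset.sum_const, Finset.card_univ, Fintype.card_perm, Fintype.card_fin,
          nsmul_eq_mul, inv_mul_cancel_left₀ this]

/-- The set of all `((w, z), v)` such that reassembling `w` and `v + z` gives a point of `A`. Here
`v` is the variable of `U` centred at its base point `z`. -/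
def secSet (k : ℕ) (π : Equiv.Perm (Fin m)) (A : Set (Fin m → Vd d)) :
    Set (((Fin (k + 1) → Vd d) × Vd d) × (Fin (m - k) → Vd d)) :=
  (fun p => assemble d m k π p.1.1 (shiftPt d _ (-p.1.2) p.2)) ⁻¹' A

lemma measurableSet_secSet (π : Equiv.Perm (Fin m)) {A : Set (Fin m → Vd d)}
    (hA : MeasurableSet A) : MeasurableSet (secSet k π A) := by
  have hg : Measurable fun p : ((Fin (k + 1) → Vd d) × Vd d) × (Fin (m - k) → Vd d) =>
      (p.1.1, shiftPt d (m - k) (-p.1.2) p.2) := by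
    unfold shiftPt; fun_prop
  exact ((measurable_assemble π).comp hg) hA

/-- The integral over `z` and over the variables of `U` in `B(G, W, U)(x; A + x)`, after `z` and
the variable `w` of `W` have been translated by `x`. -/
def innerInt (G : Vd d → ℝ) (U : Ker d (m - k)) (π : Equiv.Perm (Fin m)) (A : Set (Fin m → Vd d))
    (x : Vd d) (w : Fin (k + 1) → Vd d) : ℝ :=
  ∫ z, G (w 0 - z) * cen U (z + x) (Prod.mk (w, z) ⁻¹' secSet k π A)

lemma bm_cen_section {U : Ker d (m - k)} (hU : IsV d (m - k) U) (π : Equiv.Perm (Fin m))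
    {A : Set (Fin m → Vd d)} (hA : MeasurableSet A) (x : Vd d) :
    BM fun p : (Fin (k + 1) → Vd d) × Vd d => cen U (p.2 + x) (Prod.mk p ⁻¹' secSet k π A) :=
  (cenKer hU (fun p : (Fin (k + 1) → Vd d) × Vd d => p.2 + x) (by fun_prop)).bm_section
    (measurableSet_secSet π hA)

lemma abs_cen_section_le {U : Ker d (m - k)} (hU : IsV d (m - k) U) (π : Equiv.Perm (Fin m))
    {A : Set (Fin m → Vd d)} (hA : MeasurableSet A) (x : Vd d) (p : (Fin (k + 1) → Vd d) × Vd d) :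
    |cen U (p.2 + x) (Prod.mk p ⁻¹' secSet k π A)| ≤ vNorm d (m - k) U :=
  (abs_apply_le _ (measurable_prodMk_left (measurableSet_secSet π hA))).trans
    (hU.tvNorm_cen_le _)

lemma innerInt_eq (hGc : Continuous G) (hGi : Integrable G) {U : Ker d (m - k)}
    (hU : IsV d (m - k) U) (π : Equiv.Perm (Fin m)) {A : Set (Fin m → Vd d)}
    (hA : MeasurableSet A) (x : Vd d) (w : Fin (k + 1) → Vd d) :
    innerInt G U π A x w = smInt ((gKer hGc hGi k).ker w)
      fun z => cen U (z + x) (Prod.mk (w, z) ⁻¹' secSet k π A) :=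
  (smInt_gKer hGc hGi w ((bm_cen_section hU π hA x).comp measurable_prodMk_left)).symm

lemma bm_innerInt (hGc : Continuous G) (hGi : Integrable G) {U : Ker d (m - k)}
    (hU : IsV d (m - k) U) (π : Equiv.Perm (Fin m)) {A : Set (Fin m → Vd d)}
    (hA : MeasurableSet A) (x : Vd d) : BM (innerInt (k := k) G U π A x) := by
  have := (gKer hGc hGi k).bm_smInt (bm_cen_section hU π hA x)
  convert this using 1
  ext w
  exact innerInt_eq hGc hGi hU π hA x w

lemma abs_innerInt_le (hGc : Continuous G) (hGi : Integrable G) {U : Ker d (m - k)}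
    (hU : IsV d (m - k) U) (π : Equiv.Perm (Fin m)) {A : Set (Fin m → Vd d)}
    (hA : MeasurableSet A) (x : Vd d) (w : Fin (k + 1) → Vd d) :
    |innerInt G U π A x w| ≤ vNorm d (m - k) U * ∫ z, |G z| := by
  rw [innerInt_eq hGc hGi hU π hA]
  refine (abs_smInt_le _ ((bm_cen_section hU π hA x).comp measurable_prodMk_left)
    (fun z => abs_cen_section_le hU π hA x (w, z))).trans ?_
  exact mul_le_mul_of_nonneg_left ((gKer hGc hGi k).bound w)
    ((tvNorm_nonneg _).trans (hU.tvNorm_le x))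

lemma innerInt_periodic {U : Ker d (m - k)} (hU : IsV d (m - k) U) (π : Equiv.Perm (Fin m))
    (A : Set (Fin m → Vd d)) (x : Vd d) (i : Fin d) :
    innerInt (k := k) G U π A (x + Pi.single i (2 * Real.pi)) = innerInt G U π A x := by
  ext w
  unfold innerInt
  simp only [← add_assoc, hU.cen_periodic]

/-- Dominated convergence in `z`, with `G(w₀ - z) ‖U‖` as dominating function. -/
lemma innerInt_tendsto (hGi : Integrable G) {U : Ker d (m - k)}
    (hU : IsV d (m - k) U) (π : Equiv.Perm (Fin m)) {A : Set (Fin m → Vd d)}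
    (hA : MeasurableSet A) {x : ℕ → Vd d} {x₀ : Vd d} (hx : Tendsto x atTop (𝓝 x₀))
    (w : Fin (k + 1) → Vd d) :
    Tendsto (fun n => innerInt G U π A (x n) w) atTop (𝓝 (innerInt G U π A x₀ w)) := by
  have hGw : Integrable fun z => G (w 0 - z) := hGi.comp_sub_left (w 0)
  refine tendsto_integral_of_dominated_convergence
    (fun z => |G (w 0 - z)| * vNorm d (m - k) U) (fun n => ?_) (hGw.abs.mul_const _)
    (fun n => Filter.Eventually.of_forall fun z => ?_) (Filter.Eventually.of_forall fun z => ?_)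
  · exact hGw.aestronglyMeasurable.mul
      ((bm_cen_section hU π hA (x n)).meas.comp measurable_prodMk_left).aestronglyMeasurable
  · rw [Real.norm_eq_abs, abs_mul]
    exact mul_le_mul_of_nonneg_left (abs_cen_section_le hU π hA (x n) (w, z)) (abs_nonneg _)
  · have hc := hU.continuous_cen (A := Prod.mk (w, z) ⁻¹' secSet k π A)
      (measurable_prodMk_left (measurableSet_secSet π hA))
    exact ((hc.tendsto (z + x₀)).comp (hx.const_add z)).const_mul _

/-- Translating all integration variables by `x` expresses `B(G, W, U)(x; A + x)` through the
centred kernels of `W` and `U`. -/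
lemma Bker_shift (hGc : Continuous G) (hGi : Integrable G) (W : Ker d (k + 1))
    {U : Ker d (m - k)} (hU : IsV d (m - k) U) {A : Set (Fin m → Vd d)}
    (hA : MeasurableSet A) (x : Vd d) :
    Bker hGc hGi W hU x (shiftSet d m x A) = ((Nat.factorial m : ℝ))⁻¹ *
      ∑ π : Equiv.Perm (Fin m), smInt (cen W x) (innerInt G U π A x) := by
  have hsh : MeasurableSet (shiftSet d m x A) := measurable_shiftPt m x hA
  rw [← smInt_indicator _ hsh, smInt_Bker hGc hGi W hU x (.indicator_one hsh), Bweak]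
  congr 1
  refine Finset.sum_congr rfl fun π _ => ?_
  rw [cen, smInt_map _ (measurable_shiftPt _ x) (bm_innerInt hGc hGi hU π hA x)]
  congr 1
  ext w
  rw [innerInt]
  -- Substitute `z - x` for `z`, which leaves `w₀ - z` and the base point of `U` unchanged.
  conv_rhs => rw [← integral_sub_right_eq_self _ x]
  congr 1
  ext z
  have h1 : shiftPt d (k + 1) x w 0 - (z - x) = w 0 - z := by simp [shiftPt]
  rw [h1, sub_add_cancel, cen, VectorMeasure.map_apply _ (measurable_shiftPt _ z)
    (measurable_prodMk_left (measurableSet_secSet π hA)), ← smInt_indicator (U z) (measurable_shiftPt _ z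
    (measurable_prodMk_left (measurableSet_secSet π hA)))]
  congr 2
  ext u
  have h2 : (assemble d m k π w u ∈ shiftSet d m x A) ↔
      u ∈ shiftPt d (m - k) z ⁻¹' (Prod.mk (shiftPt d (k + 1) x w, z - x) ⁻¹' secSet k π A) := by
    change shiftPt d m x (assemble d m k π w u) ∈ A ↔ assemble d m k π (shiftPt d (k + 1) x w)
      (shiftPt d _ (-(z - x)) (shiftPt d (m - k) z u)) ∈ A
    have : shiftPt d _ (-(z - x)) (shiftPt d (m - k) z u) = shiftPt d _ x u := by
      ext1 j
      simp only [shiftPt]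
      abel
    rw [this, shiftPt_assemble]
  by_cases h : assemble d m k π w u ∈ shiftSet d m x A
  · rw [Set.indicator_of_mem h, Set.indicator_of_mem (h2.1 h)]
  · rw [Set.indicator_of_notMem h, Set.indicator_of_notMem (fun h' => h (h2.2 h'))]

end Bilinear

/-- Bound for the bilinear map `B` on the spaces `𝒱^m`: for continuous
integrable `G`, `W ∈ 𝒱^{1+k}` and `U ∈ 𝒱^{m-k}`, the kernel `B(G,W,U)` (characterized by
its pairings with bounded continuous test functions) belongs to `𝒱^m` and satisfies
`‖B(G,W,U)‖_{𝒱^m} ≤ ‖G‖_{L¹}·‖W‖_{𝒱^{1+k}}·‖U‖_{𝒱^{m-k}}`. -/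
theorem stmt2 (d m k : ℕ) (hd : 0 < d) (hk : k ≤ m)
    (G : Vd d → ℝ) (hGc : Continuous G) (hGi : Integrable G)
    (W : Ker d (k + 1)) (hW : IsV d (k + 1) W)
    (U : Ker d (m - k)) (hU : IsV d (m - k) U) :
    ∃ B : Ker d m, IsV d m B ∧
      (∀ x : Vd d, ∀ f : (Fin m → Vd d) → ℝ, Continuous f → (∃ M, ∀ y, |f y| ≤ M) →
        smInt (B x) f = Bweak d m k G W U x f) ∧
      vNorm d m B ≤ (∫ z, |G z|) * vNorm d (k + 1) W * vNorm d (m - k) U := by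
  have hbd := tvNorm_Bker_le hGc hGi hW hU
  refine ⟨Bker hGc hGi W hU, ⟨fun A hA => ?_, fun A hA x i => ?_,
    ⟨(∫ z, |G z|) * vNorm d (k + 1) W * vNorm d (m - k) U, ?_⟩⟩, ?_, ciSup_le hbd⟩
  · simp only [Bker_shift hGc hGi W hU hA]
    refine (continuous_finsetSum _ fun π _ => ?_).const_mul _
    refine continuous_iff_seqContinuous.2 fun x x₀ hx => ?_
    exact smInt_tendsto_setwise (fun n => cen W (x n)) (cen W x₀)
      (fun n => hW.tvNorm_cen_le (x n))
      (fun C hC => ((hW.continuous_cen hC).tendsto x₀).comp hx)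
      (fun n => bm_innerInt hGc hGi hU π hA (x n)) (bm_innerInt hGc hGi hU π hA x₀)
      (fun n w => abs_innerInt_le hGc hGi hU π hA (x n) w)
      (fun w => innerInt_tendsto hGi hU π hA hx w)
  · simp only [Bker_shift hGc hGi W hU hA, hW.cen_periodic, innerInt_periodic hU]
  · rintro _ ⟨x, rfl⟩
    exact hbd x
  · exact fun x f hf hM => smInt_Bker hGc hGi W hU x ⟨hf.measurable, hM⟩
end
end

section
/- Vanishing of effective force coefficients of high homogeneity: Let d be a positive integer and let (Ġ_μ)_{μ∈(0,1]} be a family of continuous integrable functions on ℝ^d depending continuously on μ. Let (F^{i,m}_μ)_{i,m∈ℕ, μ∈[0,1]} be a family of effective force coefficients for the kernels (Ġ_μ), and assume that the initial conditions vanish except in the sectors m∈{0,1,3}: F^{i,m}_0 = 0 whenever m=2 or m≥4. Then F^{i,m}_μ = 0 for all μ∈[0,1] whenever m > min(2i+1, 3i). -/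
/-!
The flow equation is triangular. If `i ≥ 1` and `m > 2i + 1`, then in each summand
`B(Ġ, F^{j,1+k}, F^{i-j,m-k})` at least one factor vanishes: for `0 < j < i` the two
homogeneities add up to `m + 1 > (2j + 1) + (2(i - j) + 1)`, so the claim at a lower order `j` or
`i - j` applies; for `j = 0` the factor `F^{0,1+k}` is zero because `1 + k > 0 = 3 · 0`; for
`j = i` the factor `F^{0,m-k}` is zero unless `k = m`, and then the other factor is `F^{i,m+1}`.
Hence an induction on `i`, combined with a descending induction on `m` starting above `3i` (where
`F^{i,m}` vanishes by assumption), shows that `∂_μ F^{i,m} = 0`. This is `bweak_eq_zero` and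
`F'_eq_zero`; the latter uses that a signed measure is determined by its integrals against bounded
continuous functions. Since `m ≥ 4`, the initial condition vanishes, and `F_eq_zero_of_F'` applies
the mean value theorem to the real function `μ ↦ F^{i,m}_μ(x; A)` for fixed `x` and `A`.
-/

open MeasureTheory

noncomputable section

/-- A family of effective force coefficients `(F^{i,m}_μ)` for the kernels `(Ġ_μ)`,
together with its `μ`-derivative family `F'`: each `F^{i,m}_μ ∈ 𝒱^m`, the family is
continuous in `μ` on `[0,1]` and continuously differentiable in `μ` on `(0,1]` with
respect to the `𝒱^m` norm, `F^{i,m}_μ = 0` whenever `m > 3i`, and the flow equation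
`∂_μ F^{i,m}_μ = -Σ_{j=0}^i Σ_{k=0}^m (1+k)·B(Ġ_μ, F^{j,1+k}_μ, F^{i-j,m-k}_μ)`
holds (in the sense of pairings with bounded continuous test functions). -/
structure FlowFamily (d : ℕ) (Gdot : ℝ → Vd d → ℝ) where
  F : (i m : ℕ) → ℝ → Ker d m
  F' : (i m : ℕ) → ℝ → Ker d m
  mem : ∀ i m : ℕ, ∀ μ ∈ Set.Icc (0 : ℝ) 1, IsV d m (F i m μ)
  high_zero : ∀ i m : ℕ, ∀ μ ∈ Set.Icc (0 : ℝ) 1, m > 3 * i → F i m μ = 0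
  contOn : ∀ i m : ℕ, ∀ μ₀ ∈ Set.Icc (0 : ℝ) 1,
    Filter.Tendsto (fun μ => vNorm d m fun x => F i m μ x - F i m μ₀ x)
      (nhdsWithin μ₀ (Set.Icc 0 1)) (nhds 0)
  hasDeriv : ∀ i m : ℕ, ∀ μ₀ ∈ Set.Ioc (0 : ℝ) 1,
    Filter.Tendsto
      (fun μ => vNorm d m fun x =>
        (μ - μ₀)⁻¹ • (F i m μ x - F i m μ₀ x) - F' i m μ₀ x)
      (nhdsWithin μ₀ (Set.Ioc 0 1 \ {μ₀})) (nhds 0)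
  derivCont : ∀ i m : ℕ, ∀ μ₀ ∈ Set.Ioc (0 : ℝ) 1,
    Filter.Tendsto (fun μ => vNorm d m fun x => F' i m μ x - F' i m μ₀ x)
      (nhdsWithin μ₀ (Set.Ioc 0 1)) (nhds 0)
  flow : ∀ i m : ℕ, ∀ μ ∈ Set.Ioc (0 : ℝ) 1, ∀ x : Vd d,
    ∀ f : (Fin m → Vd d) → ℝ, Continuous f → (∃ M, ∀ y, |f y| ≤ M) →
      smInt (F' i m μ x) f
        = -∑ j ∈ Finset.range (i + 1), ∑ k ∈ Finset.range (m + 1),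
            ((k : ℝ) + 1) * Bweak d m k (Gdot μ) (F j (k + 1) μ) (F (i - j) (m - k) μ) x f

theorem smInt_zero_left {α : Type} [MeasurableSpace α] (f : α → ℝ) :
    smInt (0 : SignedMeasure α) f = 0 := by
  simp [smInt, SignedMeasure.toJordanDecomposition_zero]

theorem bweak_zero_left (d m k : ℕ) (G : Vd d → ℝ) (U : Ker d (m - k))
    (x : Vd d) (f : (Fin m → Vd d) → ℝ) : Bweak d m k G 0 U x f = 0 := by
  simp [Bweak, smInt_zero_left]

theorem bweak_zero_right (d m k : ℕ) (G : Vd d → ℝ) (W : Ker d (k + 1))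
    (x : Vd d) (f : (Fin m → Vd d) → ℝ) : Bweak d m k G W 0 x f = 0 := by
  simp only [Bweak, Pi.zero_apply, smInt_zero_left]
  simp [smInt]

/-- A signed measure which integrates every bounded continuous function to zero is zero. -/
theorem signedMeasure_eq_zero {d m : ℕ} (s : SignedMeasure (Fin m → Vd d))
    (h : ∀ f : (Fin m → Vd d) → ℝ, Continuous f → (∃ M, ∀ y, |f y| ≤ M) → smInt s f = 0) :
    s = 0 := by
  have hpn : s.toJordanDecomposition.posPart = s.toJordanDecomposition.negPart := by
    apply ext_of_forall_integral_eq_of_IsFiniteMeasure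
    intro f
    exact sub_eq_zero.1 (h f f.continuous ⟨‖f‖, fun y => f.norm_coe_le_norm y⟩)
  rw [← s.toSignedMeasure_toJordanDecomposition, JordanDecomposition.toSignedMeasure]
  ext A hA
  rw [Measure.toSignedMeasure_sub_apply hA, hpn, sub_self]
  rfl

theorem abs_apply_le_tvNorm {α : Type} [MeasurableSpace α] (s : SignedMeasure α) (A : Set α) :
    |s A| ≤ tvNorm s := by
  refine (s.norm_le_totalVariation A).trans ?_
  exact measureReal_mono (Set.subset_univ A)

theorem tvNorm_sub_le {α : Type} [MeasurableSpace α] (s t : SignedMeasure α) :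
    tvNorm (s - t) ≤ tvNorm s + tvNorm t := by
  have h : (s - t).totalVariation Set.univ
      ≤ s.totalVariation Set.univ + t.totalVariation Set.univ := by
    simp only [SignedMeasure.totalVariation_eq_variation]
    exact VectorMeasure.variation_sub_le Set.univ
  unfold tvNorm
  rw [← ENNReal.toReal_add (measure_ne_top _ _) (measure_ne_top _ _)]
  exact ENNReal.toReal_mono (by finiteness) h

theorem tvNorm_smul {α : Type} [MeasurableSpace α] (c : ℝ) (s : SignedMeasure α) :
    tvNorm (c • s) = |c| * tvNorm s := by
  simp [tvNorm, SignedMeasure.totalVariation_eq_variation, VectorMeasure.variation_smul]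

/-- For a multiple of a difference of elements of `𝒱^m`, the real supremum defining `vNorm` is that
of a bounded set, so it does dominate the measure of every set. -/
theorem abs_apply_le_vNorm {d m : ℕ} {V W : Ker d m} (hV : IsV d m V) (hW : IsV d m W) (c : ℝ)
    (x : Vd d) (A : Set (Fin m → Vd d)) :
    |(c • (V x - W x)) A| ≤ vNorm d m fun x => c • (V x - W x) := by
  refine (abs_apply_le_tvNorm _ A).trans ?_
  obtain ⟨a, ha⟩ := hV.bdd
  obtain ⟨b, hb⟩ := hW.bdd
  refine le_ciSup (f := fun x => tvNorm (c • (V x - W x))) ⟨|c| * (a + b), ?_⟩ x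
  rintro _ ⟨y, rfl⟩
  simp only [tvNorm_smul]
  gcongr
  exact (tvNorm_sub_le _ _).trans (add_le_add (ha ⟨y, rfl⟩) (hb ⟨y, rfl⟩))

/-- If the `μ`-derivative of `F^{i,m}` vanishes on `(0,1]`, then `F^{i,m}` vanishes as soon as it
does at `μ = 0`. -/
theorem F_eq_zero_of_F' {d : ℕ} {Gdot : ℝ → Vd d → ℝ} (FF : FlowFamily d Gdot) (i m : ℕ)
    (h0 : FF.F i m 0 = 0) (h' : ∀ μ ∈ Set.Ioc (0 : ℝ) 1, FF.F' i m μ = 0) :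
    ∀ μ ∈ Set.Icc (0 : ℝ) 1, FF.F i m μ = 0 := by
  intro μ hμ
  funext x
  ext A -
  set g : ℝ → ℝ := fun ν => FF.F i m ν x A with hg
  have hcont : ContinuousOn g (Set.Icc 0 1) := by
    intro ν hν
    refine tendsto_iff_norm_sub_tendsto_zero.2 ?_
    refine squeeze_zero' (.of_forall fun _ => norm_nonneg _) ?_ (FF.contOn i m ν hν)
    filter_upwards [self_mem_nhdsWithin] with ρ hρ
    simpa [hg] using abs_apply_le_vNorm (FF.mem i m ρ hρ) (FF.mem i m ν hν) 1 x A
  have hderiv : ∀ ν ∈ Set.Ioo (0 : ℝ) 1, HasDerivAt g 0 ν := by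
    intro ν hν
    have hν' : ν ∈ Set.Ioc (0 : ℝ) 1 := Set.Ioo_subset_Ioc_self hν
    have hfil : nhdsWithin ν (Set.Ioc 0 1 \ {ν}) = nhdsWithin ν {ν}ᶜ := by
      rw [Set.sdiff_eq, Set.inter_comm]
      exact nhdsWithin_inter_of_mem' (mem_nhdsWithin_of_mem_nhds (Ioc_mem_nhds hν.1 hν.2))
    have hlim := FF.hasDeriv i m ν hν'
    simp only [h' ν hν', Pi.zero_apply, sub_zero] at hlim
    rw [hasDerivAt_iff_tendsto_slope, ← hfil]
    refine squeeze_zero_norm' ?_ hlim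
    filter_upwards [self_mem_nhdsWithin] with ρ hρ
    have := abs_apply_le_vNorm (FF.mem i m ρ (Set.Ioc_subset_Icc_self hρ.1))
      (FF.mem i m ν (Set.Ioc_subset_Icc_self hν')) (ρ - ν)⁻¹ x A
    simpa [slope_def_module, hg] using this
  have hg0 : g 0 = 0 := by simp [hg, h0]
  change g μ = 0
  rcases hμ.1.eq_or_lt with rfl | hpos
  · exact hg0
  obtain ⟨c, -, hc⟩ := exists_hasDerivAt_eq_slope g (fun _ => 0) hpos
    (hcont.mono (Set.Icc_subset_Icc_right hμ.2))
    (fun ν hν => hderiv ν ⟨hν.1, hν.2.trans_le hμ.2⟩)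
  rw [eq_comm, div_eq_zero_iff, hg0] at hc
  rcases hc with hc | hc <;> linarith

/-- The power counting behind the theorem: every summand of the flow equation for `F^{i,m}` has a
vanishing factor, given the claim at lower orders `j < i` and, at order `i`, in homogeneity
`m + 1`. -/
theorem bweak_eq_zero {d : ℕ} {Gdot : ℝ → Vd d → ℝ} (FF : FlowFamily d Gdot) {i m : ℕ}
    (hm : 2 * i + 1 < m) {μ : ℝ} (hμ : μ ∈ Set.Icc (0 : ℝ) 1)
    (hlow : ∀ j < i, ∀ n, min (2 * j + 1) (3 * j) < n → FF.F j n μ = 0)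
    (hup : FF.F i (m + 1) μ = 0) {j k : ℕ} (hj : j ≤ i) (hk : k ≤ m)
    (G : Vd d → ℝ) (x : Vd d) (f : (Fin m → Vd d) → ℝ) :
    Bweak d m k G (FF.F j (k + 1) μ) (FF.F (i - j) (m - k) μ) x f = 0 := by
  suffices h : FF.F j (k + 1) μ = 0 ∨ FF.F (i - j) (m - k) μ = 0 by
    rcases h with h | h
    · rw [h, bweak_zero_left]
    · rw [h, bweak_zero_right]
  rcases Nat.eq_zero_or_pos j with rfl | hj0
  · exact .inl (FF.high_zero _ _ μ hμ (by omega))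
  rcases hj.eq_or_lt with rfl | hji
  · rcases hk.eq_or_lt with rfl | hkm
    · exact .inl hup
    · exact .inr (FF.high_zero _ _ μ hμ (by omega))
  by_cases h : 2 * j + 1 < k + 1
  · exact .inl (hlow j hji _ (by omega))
  · exact .inr (hlow (i - j) (by omega) _ (by omega))

theorem F'_eq_zero {d : ℕ} {Gdot : ℝ → Vd d → ℝ} (FF : FlowFamily d Gdot) {i m : ℕ}
    (hm : 2 * i + 1 < m) {μ : ℝ} (hμ : μ ∈ Set.Ioc (0 : ℝ) 1)
    (hlow : ∀ j < i, ∀ n, min (2 * j + 1) (3 * j) < n → FF.F j n μ = 0)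
    (hup : FF.F i (m + 1) μ = 0) : FF.F' i m μ = 0 := by
  funext x
  refine signedMeasure_eq_zero _ fun f hf hb => ?_
  rw [FF.flow i m μ hμ x f hf hb, neg_eq_zero]
  refine Finset.sum_eq_zero fun j hj => Finset.sum_eq_zero fun k hk => ?_
  rw [Finset.mem_range] at hj hk
  rw [bweak_eq_zero FF hm (Set.Ioc_subset_Icc_self hμ) hlow hup (by omega) (by omega), mul_zero]

/-- Vanishing of effective force coefficients of high homogeneity: if the
initial conditions vanish except in the sectors `m ∈ {0,1,3}`, then `F^{i,m}_μ = 0` for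
all `μ ∈ [0,1]` whenever `m > min(2i+1, 3i)`. -/
theorem stmt3 (d : ℕ) (hd : 0 < d) (Gdot : ℝ → Vd d → ℝ)
    (hGc : ∀ μ ∈ Set.Ioc (0 : ℝ) 1, Continuous (Gdot μ) ∧ Integrable (Gdot μ))
    (hGcont : ContinuousOn (fun p : ℝ × Vd d => Gdot p.1 p.2)
      (Set.Ioc (0 : ℝ) 1 ×ˢ Set.univ))
    (FF : FlowFamily d Gdot)
    (hinit : ∀ i m : ℕ, (m = 2 ∨ 4 ≤ m) → FF.F i m 0 = 0) :
    ∀ i m : ℕ, ∀ μ ∈ Set.Icc (0 : ℝ) 1, m > min (2 * i + 1) (3 * i) → FF.F i m μ = 0 := by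
  intro i
  induction i using Nat.strong_induction_on with
  | _ i ih =>
    rcases Nat.eq_zero_or_pos i with rfl | hi
    · intro m μ hμ hm
      exact FF.high_zero 0 m μ hμ (by omega)
    -- Descending induction on `m`, with `n` bounding the distance from `m` to the sector `m > 3i`.
    have key : ∀ n m : ℕ, 3 * i < m + n → 2 * i + 1 < m →
        ∀ μ ∈ Set.Icc (0 : ℝ) 1, FF.F i m μ = 0 := by
      intro n
      induction n with
      | zero => exact fun m hmn _ μ hμ => FF.high_zero i m μ hμ (by omega)
      | succ n ihn =>
        intro m hmn hm
        refine F_eq_zero_of_F' FF i m (hinit i m (by omega)) fun μ hμ => ?_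
        have hμ' := Set.Ioc_subset_Icc_self hμ
        exact F'_eq_zero FF hm hμ (fun j hj p hp => ih j hj p μ hμ' hp)
          (ihn (m + 1) (by omega) (by omega) μ hμ')
    intro m μ hμ hm
    exact key (3 * i + 1) m (by omega) (by omega) μ hμ
end
end

section
/- Taylor decomposition of a symmetric translation-invariant kernel into a local part and second-order remainders: Let d be a positive integer and let w:ℝ^d→ℝ be a continuous integrable even function (w(−z)=w(z) for all z) such that ∫_{ℝ^d}(1+|z|)²|w(z)|dz<∞. Set V(x;y):=w(x−y), I(V):=∫_{ℝ^d} w(z)dz, and for each multi-index a∈ℕ^d with |a|=2 define R^aV(x;y) := (|a|/a!)·∫_0^1 (1−τ)^{|a|−1} τ^{−d} · ((x−y)/τ)^a · w((x−y)/τ) dτ. Then: (1) for all Schwartz functions ψ,φ on ℝ^d one has ∫∫ V(x;y)ψ(x)φ(y) dx dy = I(V)·∫ ψ(x)φ(x) dx + Σ_{|a|=2} ∫∫ R^aV(x;y) ψ(x) (∂^aφ)(y) dx dy (i.e. V = I(V)·δ^{[1]} + Σ_{|a|=2} ∂^a R^aV as tempered distributions on ℝ^{2d}, with ∂^a acting on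 the second variable); (2) |I(V)| ≤ ∫|w(z)|dz; and (3) for every multi-index a with |a|=2 and every x∈ℝ^d, ∫_{ℝ^d} |R^aV(x;y)| dy ≤ ∫_{ℝ^d} |z^a w(z)| dz. -/
/-!
Fix `x`. The substitution `z = x - y` turns `∫ w(x-y) φ(y) dy` into `∫ w(z) φ(x-z) dz`, and
`φ(x-z)` is expanded to second order with integral remainder (`taylor2`):

* the constant term gives `I(V) φ(x)`;
* the linear term integrates to zero because `w` is even (`integral_coord_mul`);
* the remainder is the sum over `|a| = 2` of
  `(2/a!) ∫ z^a w(z) ∫₀¹ (1-τ) (∂^a φ)(x - τ z) dτ dz`, and exchanging the integrals and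
  substituting `y = x - τ z` for each fixed `τ` identifies it with `∫ R^aV(x;y) (∂^a φ)(y) dy`
  (`ker_pairing`).

The chain rule produces a sum over ordered pairs `(i, j)`; since partial derivatives commute, it
regroups into multi-indices, with `2/a!` pairs over each `a` (`card_fiber`, `foldS_eIdx`). The
identity at fixed `x` (`pointwise_decomp`) is then multiplied by `ψ(x)` and integrated.

For the bound on `R^aV`, Tonelli and the same substitution give
`∫ |R^aV(x;y)| dy ≤ (2/a!) ∫₀¹ (1-τ) dτ ∫ |z^a w(z)| dz = (1/a!) ∫ |z^a w(z)| dz`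
(`integral_abs_ker_le`). Everything is integrable because `|z_i|` and `|z^a|` with `|a| = 2` are
dominated by `(1 + |z|)²`.
-/


open MeasureTheory

noncomputable section

/-- The monomial `z^a = Π_i z_i^{a_i}` for a multi-index `a`. -/
def mpow (d : ℕ) (a : Fin d → ℕ) (z : Vd d) : ℝ := ∏ i, (z i) ^ (a i)

/-- The (finite) set of multi-indices `a : Fin d → ℕ` with `|a| = 2`. -/
def idx2 (d : ℕ) : Finset (Fin d → ℕ) :=
  (Fintype.piFinset fun _ : Fin d => Finset.range 3).filter fun a => (∑ i, a i) = 2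

/-- The partial derivative `∂_i`. -/
def pd (d : ℕ) (i : Fin d) (f : Vd d → ℝ) : Vd d → ℝ :=
  fun x => fderiv ℝ f x (Pi.single i 1)

/-- The iterated partial derivative `∂^a` for a multi-index `a : Fin d → ℕ`. -/
def mderiv (d : ℕ) (a : Fin d → ℕ) (f : Vd d → ℝ) : Vd d → ℝ :=
  (List.finRange d).foldr (fun i g => (pd d i)^[a i] g) f

/-- The second-order Taylor remainder kernel
`R^aV(x;y) = (|a|/a!)·∫₀¹ (1-τ)^{|a|-1} τ^{-d} ((x-y)/τ)^a w((x-y)/τ) dτ`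
associated with the translation-invariant kernel `V(x;y) = w(x-y)`. -/
def RaV (d : ℕ) (a : Fin d → ℕ) (w : Vd d → ℝ) (x y : Vd d) : ℝ :=
  (((∑ i, a i : ℕ) : ℝ) / ((∏ i, Nat.factorial (a i) : ℕ) : ℝ)) *
    ∫ τ in (0 : ℝ)..1,
      (1 - τ) ^ ((∑ i, a i) - 1) * (τ⁻¹ ^ d) *
        mpow d a (τ⁻¹ • (x - y)) * w (τ⁻¹ • (x - y))

/-! ### Multi-indices of order two -/

lemma mem_idx2 {d : ℕ} {a : Fin d → ℕ} : a ∈ idx2 d ↔ ∑ i, a i = 2 := by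
  simp only [idx2, Finset.mem_filter, Fintype.mem_piFinset, Finset.mem_range, and_iff_right_iff_imp]
  intro h i
  have := Finset.single_le_sum (f := a) (fun i _ => Nat.zero_le _) (Finset.mem_univ i)
  omega

lemma exists_single_add {d n : ℕ} {a : Fin d → ℕ} (h : ∑ i, a i = n + 1) :
    ∃ (i : Fin d) (b : Fin d → ℕ), a = Pi.single i 1 + b ∧ ∑ i, b i = n := by
  have h0 : ∑ i, a i ≠ 0 := by omega
  obtain ⟨i, -, hi⟩ := Finset.exists_ne_zero_of_sum_ne_zero h0
  have ha : a = Pi.single i 1 + (a - Pi.single i 1) := by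
    funext k
    by_cases hk : k = i
    · subst hk
      simp
      omega
    · simp [hk]
  refine ⟨i, a - Pi.single i 1, ha, ?_⟩
  have h2 : ∑ k, a k = ∑ k, (Pi.single i 1 : Fin d → ℕ) k + ∑ k, (a - Pi.single i 1 : Fin d → ℕ) k := by
    rw [← Finset.sum_add_distrib]
    exact Finset.sum_congr rfl fun k _ => congrFun ha k
  rw [Finset.sum_pi_single' i 1 Finset.univ] at h2
  simp only [Finset.mem_univ, if_true] at h2
  omega

/-- The multi-index `e_i + e_j`. -/
def eIdx {d : ℕ} (p : Fin d × Fin d) : Fin d → ℕ := Pi.single p.1 1 + Pi.single p.2 1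

lemma eIdx_mem {d : ℕ} (p : Fin d × Fin d) : eIdx p ∈ idx2 d := by
  rw [mem_idx2]
  simp [eIdx, Finset.sum_add_distrib]

lemma exists_eIdx {d : ℕ} {a : Fin d → ℕ} (ha : a ∈ idx2 d) : ∃ p, a = eIdx p := by
  rw [mem_idx2] at ha
  obtain ⟨i, b, rfl, hb⟩ := exists_single_add ha
  obtain ⟨j, c, rfl, hc⟩ := exists_single_add hb
  refine ⟨(i, j), ?_⟩
  have : c = 0 := by
    funext k
    simpa using (Finset.sum_eq_zero_iff.mp hc) k (Finset.mem_univ k)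
  simp [eIdx, this]

/-- The coefficient `|a|/a!`. -/
def cf {d : ℕ} (a : Fin d → ℕ) : ℝ :=
  ((∑ i, a i : ℕ) : ℝ) / ((∏ i, Nat.factorial (a i) : ℕ) : ℝ)

/-- A multi-index of order two equals `e_i + e_j` for exactly `2 / a!` ordered pairs `(i, j)`. -/
lemma card_fiber {d : ℕ} {a : Fin d → ℕ} (ha : a ∈ idx2 d) :
    ((Finset.univ.filter fun p : Fin d × Fin d => eIdx p = a).card : ℝ) = cf a := by
  have hs := mem_idx2.mp ha
  obtain ⟨⟨i, j⟩, rfl⟩ := exists_eIdx ha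
  rw [cf, hs]
  by_cases hij : i = j
  · subst hij
    have h1 : (Finset.univ.filter fun p : Fin d × Fin d => eIdx p = eIdx (i, i)) = {(i, i)} := by
      ext ⟨k, l⟩
      simp only [Finset.mem_filter, Finset.mem_univ, true_and, Finset.mem_singleton]
      refine ⟨fun h => ?_, fun h => by rw [h]⟩
      have hk := congrFun h k
      have hl := congrFun h l
      simp only [eIdx, Pi.add_apply, Pi.single_apply] at hk hl
      rw [Prod.mk.injEq]
      grind
    have h2 : ∏ k, Nat.factorial (eIdx (i, i) k) = 2 := by
      rw [Finset.prod_eq_single i]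
      · simp [eIdx]
      · intro b _ hb
        simp [eIdx, hb]
      · simp
    rw [h1, h2]
    simp
  · have h1 : (Finset.univ.filter fun p : Fin d × Fin d => eIdx p = eIdx (i, j))
        = {(i, j), (j, i)} := by
      ext ⟨k, l⟩
      simp only [Finset.mem_filter, Finset.mem_univ, true_and, Finset.mem_singleton,
        Finset.mem_insert]
      constructor
      · intro h
        have hi := congrFun h i
        have hj := congrFun h j
        simp only [eIdx, Pi.add_apply, Pi.single_apply] at hi hj
        rw [Prod.mk.injEq, Prod.mk.injEq]
        grind
      · rintro (h | h)
        · rw [h]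
        · rw [h]
          simp [eIdx, add_comm]
    have h2 : ∏ k, Nat.factorial (eIdx (i, j) k) = 1 := by
      apply Finset.prod_eq_one
      intro k _
      rw [Nat.factorial_eq_one]
      simp only [eIdx, Pi.add_apply, Pi.single_apply]
      grind
    rw [h1, h2, Finset.card_pair (by simp [hij])]
    simp

/-- Regrouping a sum over ordered pairs of coordinates by multi-index. -/
lemma sum_pairs_eq {d : ℕ} (F : (Fin d → ℕ) → ℝ) :
    ∑ p : Fin d × Fin d, F (eIdx p) = ∑ a ∈ idx2 d, cf a * F a := by
  rw [← Finset.sum_fiberwise_of_maps_to (s := Finset.univ) (t := idx2 d) (g := eIdx)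
    (fun p _ => eIdx_mem p)]
  refine Finset.sum_congr rfl fun a ha => ?_
  rw [← card_fiber ha, ← nsmul_eq_mul, ← Finset.sum_const]
  refine Finset.sum_congr rfl fun p hp => ?_
  rw [(Finset.mem_filter.mp hp).2]

lemma mpow_eIdx {d : ℕ} (p : Fin d × Fin d) (z : Vd d) :
    mpow d (eIdx p) z = z p.1 * z p.2 := by
  have h (i : Fin d) : ∏ k, z k ^ (Pi.single i 1 : Fin d → ℕ) k = z i := by
    rw [Finset.prod_eq_single i]
    · simp
    · intro b _ hb
      simp [hb]
    · simp
  simp only [mpow, eIdx, Pi.add_apply, pow_add, Finset.prod_mul_distrib, h]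

lemma cf_bounds {d : ℕ} {a : Fin d → ℕ} (ha : a ∈ idx2 d) : 0 ≤ cf a ∧ cf a ≤ 2 := by
  rw [cf, mem_idx2.mp ha]
  have : (1 : ℝ) ≤ ((∏ i, Nat.factorial (a i) : ℕ) : ℝ) := by
    exact_mod_cast Finset.prod_pos fun i _ => Nat.factorial_pos _
  refine ⟨by positivity, ?_⟩
  rw [div_le_iff₀ (by linarith)]
  push_cast at *
  linarith

/-! ### Partial derivatives of Schwartz functions -/

open LineDeriv in
/-- The partial derivative `∂_i` as a map on Schwartz functions. -/
def pdS {d : ℕ} (i : Fin d) (φ : SchwartzMap (Vd d) ℝ) : SchwartzMap (Vd d) ℝ :=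
  ∂_{(Pi.single i 1 : Vd d)} φ

lemma coe_pdS {d : ℕ} (i : Fin d) (φ : SchwartzMap (Vd d) ℝ) : ⇑(pdS i φ) = pd d i φ := rfl

lemma pdS_comm {d : ℕ} (i j : Fin d) (φ : SchwartzMap (Vd d) ℝ) :
    pdS i (pdS j φ) = pdS j (pdS i φ) := by
  have key (k l : Fin d) (x : Vd d) : pdS k (pdS l φ) x
      = fderiv ℝ (fderiv ℝ φ) x (Pi.single k 1) (Pi.single l 1) := by
    have hd : DifferentiableAt ℝ (fderiv ℝ φ) x :=
      ((φ.smooth 2).fderiv_right (m := 1) (by norm_num)).differentiable (by norm_num) x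
    change fderiv ℝ (fun y => fderiv ℝ φ y (Pi.single l 1)) x (Pi.single k 1) = _
    rw [fderiv_clm_apply hd (differentiableAt_const _)]
    simp
  ext x
  rw [key, key]
  exact ((φ.smooth 2).contDiffAt.isSymmSndFDerivAt (by simp)).eq _ _

/-- The iterated derivative of a Schwartz function along a list of coordinates. -/
def foldS {d : ℕ} (l : List (Fin d)) (a : Fin d → ℕ) (φ : SchwartzMap (Vd d) ℝ) :
    SchwartzMap (Vd d) ℝ :=
  l.foldr (fun i g => (pdS i)^[a i] g) φ

lemma coe_iterate_pdS {d : ℕ} (i : Fin d) (n : ℕ) (φ : SchwartzMap (Vd d) ℝ) :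
    ⇑((pdS i)^[n] φ) = (pd d i)^[n] φ := by
  induction n with
  | zero => rfl
  | succ n ih => rw [Function.iterate_succ_apply', Function.iterate_succ_apply', coe_pdS, ih]

lemma coe_foldS {d : ℕ} (l : List (Fin d)) (a : Fin d → ℕ) (φ : SchwartzMap (Vd d) ℝ) :
    ⇑(foldS l a φ) = l.foldr (fun i g => (pd d i)^[a i] g) φ := by
  induction l with
  | nil => rfl
  | cons k l ih =>
    rw [List.foldr_cons, ← ih]
    exact coe_iterate_pdS k (a k) _

lemma iterate_pdS_comm {d : ℕ} (i j : Fin d) (n : ℕ) (φ : SchwartzMap (Vd d) ℝ) :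
    (pdS i)^[n] (pdS j φ) = pdS j ((pdS i)^[n] φ) :=
  ((show Function.Commute (pdS i) (pdS j) from pdS_comm i j).iterate_left n) φ

lemma foldS_single_add_of_notMem {d : ℕ} (i : Fin d) (b : Fin d → ℕ) (l : List (Fin d))
    (hl : i ∉ l) (φ : SchwartzMap (Vd d) ℝ) :
    foldS l (Pi.single i 1 + b) φ = foldS l b φ := by
  induction l with
  | nil => rfl
  | cons k l ih =>
    rw [List.mem_cons, not_or] at hl
    have h1 : (Pi.single i 1 + b : Fin d → ℕ) k = b k := by simp [Ne.symm hl.1]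
    change (pdS k)^[(Pi.single i 1 + b : Fin d → ℕ) k] (foldS l (Pi.single i 1 + b) φ)
      = (pdS k)^[b k] (foldS l b φ)
    rw [h1, ih hl.2]

lemma foldS_single_add {d : ℕ} (i : Fin d) (b : Fin d → ℕ) (l : List (Fin d)) (hn : l.Nodup)
    (hl : i ∈ l) (φ : SchwartzMap (Vd d) ℝ) :
    foldS l (Pi.single i 1 + b) φ = pdS i (foldS l b φ) := by
  induction l with
  | nil => simp at hl
  | cons k l ih =>
    rw [List.nodup_cons] at hn
    change (pdS k)^[(Pi.single i 1 + b : Fin d → ℕ) k] (foldS l (Pi.single i 1 + b) φ)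
      = pdS i ((pdS k)^[b k] (foldS l b φ))
    by_cases hk : i = k
    · subst hk
      have h1 : (Pi.single i 1 + b : Fin d → ℕ) i = b i + 1 := by simp [add_comm]
      rw [h1, foldS_single_add_of_notMem i b l hn.1, Function.iterate_succ_apply']
    · have h1 : (Pi.single i 1 + b : Fin d → ℕ) k = b k := by simp [Ne.symm hk]
      rw [h1, ih hn.2 (by simpa [hk] using hl), iterate_pdS_comm]

lemma foldS_zero {d : ℕ} (l : List (Fin d)) (φ : SchwartzMap (Vd d) ℝ) : foldS l 0 φ = φ := by
  induction l with
  | nil => rfl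
  | cons k l ih => exact ih

/-- Since partial derivatives commute, `∂^{e_i + e_j} = ∂_i ∂_j`. -/
lemma foldS_eIdx {d : ℕ} (p : Fin d × Fin d) (φ : SchwartzMap (Vd d) ℝ) :
    foldS (List.finRange d) (eIdx p) φ = pdS p.1 (pdS p.2 φ) := by
  have hn := List.nodup_finRange d
  rw [eIdx, foldS_single_add _ _ _ hn (List.mem_finRange _),
    ← add_zero (Pi.single p.2 1 : Fin d → ℕ),
    foldS_single_add _ _ _ hn (List.mem_finRange _), foldS_zero]

/-! ### Taylor's formula -/

lemma hasDerivAt_line {d : ℕ} (f : SchwartzMap (Vd d) ℝ) (x z : Vd d) (t : ℝ) :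
    HasDerivAt (fun s : ℝ => f (x - s • z)) (-∑ i, z i * pdS i f (x - t • z)) t := by
  have h1 : HasDerivAt (fun s : ℝ => x - s • z) (-z) t := by
    simpa using ((hasDerivAt_id t).smul_const z).const_sub x
  have h2 := (f.differentiableAt (x := x - t • z)).hasFDerivAt.comp_hasDerivAt t h1
  have key (L : Vd d →L[ℝ] ℝ) : L z = ∑ i, z i * L (Pi.single i 1) := by
    conv_lhs => rw [pi_eq_sum_univ' z]
    rw [map_sum]
    refine Finset.sum_congr rfl fun i _ => ?_
    rw [map_smul, smul_eq_mul]
  refine HasDerivAt.congr_deriv h2 ?_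
  rw [map_neg, key]
  rfl

/-- Second-order Taylor expansion of a Schwartz function with integral remainder. -/
lemma taylor2 {d : ℕ} (φ : SchwartzMap (Vd d) ℝ) (x z : Vd d) :
    φ (x - z) = φ x - ∑ i, z i * pdS i φ x
      + ∑ a ∈ idx2 d, cf a * (mpow d a z *
          ∫ τ in (0 : ℝ)..1, (1 - τ) * foldS (List.finRange d) a φ (x - τ • z)) := by
  set g2 : ℝ → ℝ := fun t => ∑ p : Fin d × Fin d, z p.1 * z p.2 * pdS p.1 (pdS p.2 φ) (x - t • z)
  -- antiderivative of `(1 - t) * g''(t)`, where `g(t) = φ (x - t z)`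
  have hder (t : ℝ) : HasDerivAt
      (fun s : ℝ => φ (x - s • z) + (1 - s) * (-∑ i, z i * pdS i φ (x - s • z)))
      ((1 - t) * g2 t) t := by
    have h1 := hasDerivAt_line φ x z t
    have h2 : HasDerivAt (fun s : ℝ => -∑ i, z i * pdS i φ (x - s • z)) (g2 t) t := by
      have := (HasDerivAt.fun_sum (u := Finset.univ) fun i _ =>
        (hasDerivAt_line (pdS i φ) x z t).const_mul (z i)).neg
      refine this.congr_deriv ?_
      simp only [g2, Fintype.sum_prod_type_right, mul_neg, Finset.sum_neg_distrib, neg_neg,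
        Finset.mul_sum]
      refine Finset.sum_congr rfl fun i _ => Finset.sum_congr rfl fun j _ => ?_
      ring
    have h3 := h1.add (((hasDerivAt_id t).const_sub 1).mul h2)
    refine h3.congr_deriv ?_
    simp only [id]
    ring
  have hc (f : SchwartzMap (Vd d) ℝ) : Continuous fun t : ℝ => f (x - t • z) :=
    f.continuous.comp (by fun_prop)
  have hg2 : Continuous g2 := continuous_finsetSum _ fun p _ => (hc _).const_mul _
  have hI := intervalIntegral.integral_eq_sub_of_hasDerivAt (a := 0) (b := 1)
    (fun t _ => hder t) (Continuous.intervalIntegrable (by fun_prop) _ _)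
  have hS : ∫ t in (0 : ℝ)..1, (1 - t) * g2 t = ∑ a ∈ idx2 d, cf a * (mpow d a z *
          ∫ τ in (0 : ℝ)..1, (1 - τ) * foldS (List.finRange d) a φ (x - τ • z)) := by
    rw [← sum_pairs_eq (fun a => mpow d a z *
          ∫ τ in (0 : ℝ)..1, (1 - τ) * foldS (List.finRange d) a φ (x - τ • z))]
    simp only [g2, Finset.mul_sum]
    rw [intervalIntegral.integral_finsetSum]
    · refine Finset.sum_congr rfl fun p _ => ?_
      rw [mpow_eIdx, foldS_eIdx, ← intervalIntegral.integral_const_mul]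
      congr 1
      funext t
      ring
    · intro p _
      have := hc (pdS p.1 (pdS p.2 φ))
      exact Continuous.intervalIntegrable (by fun_prop) _ _
  rw [← hS, hI]
  simp only [one_smul, zero_smul, sub_zero, sub_self, zero_mul, one_mul]
  ring

/-! ### Fubini for the remainder kernel -/

/-- Lebesgue measure on the unit interval of the scaling parameter `τ`. -/
abbrev mu : Measure ℝ := volume.restrict (Set.Ioc (0 : ℝ) 1)

/-- The integrand `(1 - τ) τ^{-d} h((x - y)/τ)` of the remainder kernel, for a profile `h`. -/
def ker (d : ℕ) (h : Vd d → ℝ) (x : Vd d) (τ : ℝ) (y : Vd d) : ℝ :=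
  (1 - τ) * (τ⁻¹ ^ d) * h (τ⁻¹ • (x - y))

/-- The substitution `y = x - τ z`, whose Jacobian `τ^d` cancels the prefactor `τ^{-d}`. -/
lemma integral_ker_mul {d : ℕ} (h G : Vd d → ℝ) (x : Vd d) {τ : ℝ} (hτ : 0 < τ) :
    ∫ y, ker d h x τ y * G y = (1 - τ) * ∫ z, h z * G (x - τ • z) := by
  have h1 : ∫ y, ker d h x τ y * G y
      = ∫ u, (fun u => (1 - τ) * (τ⁻¹ ^ d) * h (τ⁻¹ • u) * G (x - u)) u := by
    rw [← integral_sub_left_eq_self _ _ x]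
    simp [ker]
  have h2 := Measure.integral_comp_inv_smul_of_nonneg (volume : Measure (Vd d))
    (fun z => h z * G (x - τ • z)) hτ.le
  simp only [smul_inv_smul₀ hτ.ne', Module.finrank_fin_fun, smul_eq_mul] at h2
  rw [h1]
  simp only [mul_assoc]
  rw [integral_const_mul, integral_const_mul, h2, ← mul_assoc (τ⁻¹ ^ d), ← mul_pow,
    inv_mul_cancel₀ hτ.ne', one_pow, one_mul]

lemma integrable_ker {d : ℕ} {h : Vd d → ℝ} (hi : Integrable h) (x : Vd d) {τ : ℝ} (hτ : 0 < τ) :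
    Integrable (ker d h x τ) :=
  (((integrable_comp_smul_iff volume h (inv_ne_zero hτ.ne')).mpr hi).comp_sub_left x).const_mul _

lemma integrable_ker_prod {d : ℕ} {h : Vd d → ℝ} (hc : Continuous h) (hi : Integrable h)
    (x : Vd d) : Integrable (fun q : ℝ × Vd d => ker d h x q.1 q.2) (mu.prod volume) := by
  have hm : Measurable (fun q : ℝ × Vd d => ker d h x q.1 q.2) := by
    have := hc.measurable
    unfold ker
    fun_prop
  rw [integrable_prod_iff hm.aestronglyMeasurable]
  constructor
  · filter_upwards [ae_restrict_mem measurableSet_Ioc] with τ hτ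
    exact integrable_ker hi x hτ.1
  · have : Integrable (fun τ : ℝ => (1 - τ) * ∫ z, |h z|) mu :=
      (Continuous.integrableOn_Ioc (by fun_prop) : IntegrableOn _ _ _)
    refine this.congr ?_
    filter_upwards [ae_restrict_mem measurableSet_Ioc] with τ hτ
    have := integral_ker_mul (fun z => |h z|) (fun _ => 1) x hτ.1
    simp only [mul_one] at this
    rw [← this]
    congr 1
    funext y
    have h1 : 0 ≤ 1 - τ := by linarith [hτ.2]
    have h2 : 0 ≤ τ⁻¹ ^ d := pow_nonneg (inv_nonneg.mpr hτ.1.le) _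
    simp only [ker, Real.norm_eq_abs, abs_mul, abs_of_nonneg h1, abs_of_nonneg h2]

lemma integral_mu_one_sub : ∫ τ, (1 - τ) ∂mu = 1 / 2 := by
  rw [← intervalIntegral.integral_of_le zero_le_one, intervalIntegral.integral_sub (by simp)
    (by simp)]
  simp
  norm_num

lemma integral_abs_ker_le {d : ℕ} {h : Vd d → ℝ} (hc : Continuous h) (hi : Integrable h)
    (x : Vd d) : ∫ y, |∫ τ, ker d h x τ y ∂mu| ≤ 1 / 2 * ∫ z, |h z| := by
  have hk := (integrable_ker_prod hc hi x)
  have hks := hk.norm.swap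
  have e : ∫ y, ∫ τ, ‖ker d h x τ y‖ ∂mu = 1 / 2 * ∫ z, |h z| := by
    rw [← integral_integral_swap (f := fun τ y => ‖ker d h x τ y‖) hk.norm,
      ← integral_mu_one_sub, ← integral_mul_const]
    refine integral_congr_ae ?_
    filter_upwards [ae_restrict_mem measurableSet_Ioc] with τ hτ
    have := integral_ker_mul (fun z => |h z|) (fun _ => 1) x hτ.1
    simp only [mul_one] at this
    rw [← this]
    congr 1
    funext y
    have h1 : 0 ≤ 1 - τ := by linarith [hτ.2]
    have h2 : 0 ≤ τ⁻¹ ^ d := pow_nonneg (inv_nonneg.mpr hτ.1.le) _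
    simp only [ker, Real.norm_eq_abs, abs_mul, abs_of_nonneg h1, abs_of_nonneg h2]
  rw [← e]
  refine integral_mono_of_nonneg (.of_forall fun _ => abs_nonneg _) hks.integral_prod_left
    (.of_forall fun y => ?_)
  exact norm_integral_le_integral_norm (μ := mu) fun τ => ker d h x τ y

lemma integrable_taylor_prod {d : ℕ} {h : Vd d → ℝ} (hi : Integrable h)
    (G : SchwartzMap (Vd d) ℝ) (x : Vd d) :
    Integrable (fun q : Vd d × ℝ => h q.1 * (1 - q.2) * G (x - q.2 • q.1))
      (volume.prod mu) := by
  have h1 : Integrable (fun τ : ℝ => 1 - τ) mu :=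
    (Continuous.integrableOn_Ioc (by fun_prop) : IntegrableOn _ _ _)
  refine (hi.mul_prod h1).mul_bdd (c := SchwartzMap.seminorm ℝ 0 0 G) ?_
    (.of_forall fun q => SchwartzMap.norm_le_seminorm ℝ G _)
  exact (G.continuous.comp (by fun_prop)).aestronglyMeasurable

/-- The remainder kernel paired with `G` equals the Taylor remainder averaged against `h`: Fubini
and, for each `τ`, the substitution `y = x - τ z`. -/
lemma ker_pairing {d : ℕ} {h : Vd d → ℝ} (hc : Continuous h) (hi : Integrable h)
    (G : SchwartzMap (Vd d) ℝ) (x : Vd d) :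
    ∫ y, (∫ τ, ker d h x τ y ∂mu) * G y
      = ∫ z, h z * ∫ τ, (1 - τ) * G (x - τ • z) ∂mu := by
  have hk : Integrable (fun q : ℝ × Vd d => ker d h x q.1 q.2 * G q.2) (mu.prod volume) :=
    (integrable_ker_prod hc hi x).mul_bdd (c := SchwartzMap.seminorm ℝ 0 0 G)
      (G.continuous.comp (by fun_prop)).aestronglyMeasurable
      (.of_forall fun q => SchwartzMap.norm_le_seminorm ℝ G _)
  simp only [← integral_mul_const, ← integral_const_mul, ← mul_assoc]
  rw [← integral_integral_swap (f := fun τ y => ker d h x τ y * G y) hk,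
    integral_integral_swap (f := fun z τ => h z * (1 - τ) * G (x - τ • z))
      (integrable_taylor_prod hi G x)]
  refine integral_congr_ae ?_
  filter_upwards [ae_restrict_mem measurableSet_Ioc] with τ hτ
  rw [integral_ker_mul h G x hτ.1, ← integral_const_mul]
  congr 1
  funext z
  ring

/-- Integrability in the outer variable, needed to split the final integral over `x` into a sum. -/
lemma integrable_ker_pairing {d : ℕ} {h : Vd d → ℝ} (hc : Continuous h) (hi : Integrable h)
    (G ψ : SchwartzMap (Vd d) ℝ) :
    Integrable fun x => ψ x * ∫ y, (∫ τ, ker d h x τ y ∂mu) * G y := by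
  have h1 : Integrable (fun τ : ℝ => 1 - τ) mu :=
    (Continuous.integrableOn_Ioc (by fun_prop) : IntegrableOn _ _ _)
  have h2 : Integrable (fun q : Vd d × (Vd d × ℝ) =>
      ψ q.1 * (h q.2.1 * (1 - q.2.2)) * G (q.1 - q.2.2 • q.2.1))
      (volume.prod (volume.prod mu)) :=
    (ψ.integrable.mul_prod (hi.mul_prod h1)).mul_bdd (c := SchwartzMap.seminorm ℝ 0 0 G)
      (G.continuous.comp (by fun_prop)).aestronglyMeasurable
      (.of_forall fun q => SchwartzMap.norm_le_seminorm ℝ G _)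
  refine h2.integral_prod_left.congr (.of_forall fun x => ?_)
  simp only [mul_assoc (ψ x)]
  rw [integral_const_mul, integral_prod _ (integrable_taylor_prod hi G x), ker_pairing hc hi]
  simp only [← integral_const_mul, ← mul_assoc]

/-! ### Moments of `w` -/

lemma abs_coord_le {d : ℕ} (z : Vd d) (i : Fin d) : |z i| ≤ euclNorm d z := by
  rw [euclNorm, ← Real.sqrt_sq_eq_abs]
  exact Real.sqrt_le_sqrt (Finset.single_le_sum (f := fun i => z i ^ 2)
    (fun i _ => sq_nonneg _) (Finset.mem_univ i))

lemma integrable_of_le {d : ℕ} {w : Vd d → ℝ} (hcont : Continuous w)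
    (hmom : Integrable fun z => (1 + euclNorm d z) ^ 2 * |w z|) {m : Vd d → ℝ}
    (hm : Continuous m) (hle : ∀ z, |m z| ≤ (1 + euclNorm d z) ^ 2) :
    Integrable fun z => m z * w z := by
  refine hmom.mono' (hm.mul hcont).aestronglyMeasurable (.of_forall fun z => ?_)
  rw [Real.norm_eq_abs, abs_mul]
  exact mul_le_mul_of_nonneg_right (hle z) (abs_nonneg _)

lemma integrable_coord_mul {d : ℕ} {w : Vd d → ℝ} (hcont : Continuous w)
    (hmom : Integrable fun z => (1 + euclNorm d z) ^ 2 * |w z|) (i : Fin d) :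
    Integrable fun z => z i * w z := by
  refine integrable_of_le hcont hmom (continuous_apply i) fun z => ?_
  nlinarith [abs_coord_le z i, abs_nonneg (z i)]

lemma continuous_mpow {d : ℕ} (a : Fin d → ℕ) : Continuous (mpow d a) := by
  unfold mpow
  fun_prop

lemma integrable_mpow_mul {d : ℕ} {w : Vd d → ℝ} (hcont : Continuous w)
    (hmom : Integrable fun z => (1 + euclNorm d z) ^ 2 * |w z|) {a : Fin d → ℕ}
    (ha : a ∈ idx2 d) : Integrable fun z => mpow d a z * w z := by
  refine integrable_of_le hcont hmom (continuous_mpow a) fun z => ?_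
  obtain ⟨p, rfl⟩ := exists_eIdx ha
  rw [mpow_eIdx, abs_mul]
  nlinarith [abs_coord_le z p.1, abs_nonneg (z p.1), abs_coord_le z p.2, abs_nonneg (z p.2)]

lemma RaV_eq {d : ℕ} {a : Fin d → ℕ} (ha : a ∈ idx2 d) (w : Vd d → ℝ) (x y : Vd d) :
    RaV d a w x y = cf a * ∫ τ, ker d (fun z => mpow d a z * w z) x τ y ∂mu := by
  rw [RaV, cf, intervalIntegral.integral_of_le zero_le_one, mem_idx2.mp ha]
  simp only [ker, mul_assoc, Nat.add_one_sub_one, pow_one]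

/-- Evenness of `w` kills the first-order Taylor term. -/
lemma integral_coord_mul {d : ℕ} {w : Vd d → ℝ} (heven : ∀ z, w (-z) = w z) (i : Fin d) :
    ∫ z, z i * w z = 0 := by
  have h := integral_neg_eq_self (fun z : Vd d => z i * w z) volume
  simp only [heven, Pi.neg_apply, neg_mul, integral_neg] at h
  linarith

/-- The decomposition tested in the second variable only, at a fixed first variable `x`. -/
lemma pointwise_decomp {d : ℕ} {w : Vd d → ℝ}
    (hcont : Continuous w) (hint : Integrable w) (heven : ∀ z, w (-z) = w z)
    (hmom : Integrable fun z => (1 + euclNorm d z) ^ 2 * |w z|)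
    (φ : SchwartzMap (Vd d) ℝ) (x : Vd d) :
    ∫ y, w (x - y) * φ y = (∫ z, w z) * φ x
      + ∑ a ∈ idx2 d, cf a * ∫ y, (∫ τ, ker d (fun z => mpow d a z * w z) x τ y ∂mu)
          * foldS (List.finRange d) a φ y := by
  have h1 : ∫ y, w (x - y) * φ y = ∫ z, w z * φ (x - z) := by
    rw [← integral_sub_left_eq_self _ _ x]
    simp
  have hA : Integrable fun z => w z * φ x := hint.mul_const _
  have hB (i : Fin d) : Integrable fun z => pdS i φ x * (z i * w z) :=
    (integrable_coord_mul hcont hmom i).const_mul _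
  have hC (a : Fin d → ℕ) (ha : a ∈ idx2 d) : Integrable fun z : Vd d =>
      cf a * ((mpow d a z * w z)
        * ∫ τ, (1 - τ) * foldS (List.finRange d) a φ (x - τ • z) ∂mu) := by
    refine ((integrable_taylor_prod (integrable_mpow_mul hcont hmom ha)
      (foldS (List.finRange d) a φ) x).integral_prod_left.const_mul (cf a)).congr
        (.of_forall fun z => ?_)
    simp only [← integral_const_mul, ← mul_assoc]
  have h2 (z : Vd d) : w z * φ (x - z) = w z * φ x - ∑ i, pdS i φ x * (z i * w z)
      + ∑ a ∈ idx2 d, cf a * ((mpow d a z * w z)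
        * ∫ τ, (1 - τ) * foldS (List.finRange d) a φ (x - τ • z) ∂mu) := by
    rw [taylor2 φ x z, mul_add, mul_sub, Finset.mul_sum, Finset.mul_sum]
    congr 1
    · congr 1
      exact Finset.sum_congr rfl fun i _ => by ring
    · refine Finset.sum_congr rfl fun a _ => ?_
      rw [intervalIntegral.integral_of_le zero_le_one]
      ring
  rw [h1]
  simp only [h2]
  have hBs : Integrable fun z => ∑ i, pdS i φ x * (z i * w z) :=
    integrable_finsetSum _ fun i _ => hB i
  have hAB : Integrable fun z => w z * φ x - ∑ i, pdS i φ x * (z i * w z) := hA.sub hBs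
  rw [integral_add hAB (integrable_finsetSum _ hC), integral_sub hA hBs,
    integral_finsetSum _ (fun i _ => hB i), integral_finsetSum _ hC, integral_mul_const]
  simp only [integral_const_mul, integral_coord_mul heven, mul_zero, Finset.sum_const_zero,
    sub_zero]
  congr 1
  refine Finset.sum_congr rfl fun a ha => ?_
  rw [ker_pairing (h := fun z => mpow d a z * w z) ((continuous_mpow a).mul hcont) (integrable_mpow_mul hcont hmom ha)]

/-- Taylor decomposition of a symmetric translation-invariant kernel into a
local part and second-order remainders: with `V(x;y) := w(x-y)` and `I(V) := ∫ w`, one has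
`V = I(V)·δ^{[1]} + Σ_{|a|=2} ∂^a R^aV` in the sense of pairings with Schwartz functions,
together with the bounds `|I(V)| ≤ ∫|w|` and `∫|R^aV(x;y)|dy ≤ ∫|z^a w(z)|dz`. -/
theorem stmt5 (d : ℕ) (hd : 0 < d) (w : Vd d → ℝ)
    (hcont : Continuous w) (hint : Integrable w)
    (heven : ∀ z, w (-z) = w z)
    (hmom : Integrable fun z => (1 + euclNorm d z) ^ 2 * |w z|) :
    (∀ ψ φ : SchwartzMap (Vd d) ℝ,
      (∫ x, ∫ y, w (x - y) * ψ x * φ y)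
        = (∫ z, w z) * (∫ x, ψ x * φ x)
          + ∑ a ∈ idx2 d, ∫ x, ∫ y, RaV d a w x y * ψ x * mderiv d a (⇑φ) y) ∧
    |∫ z, w z| ≤ (∫ z, |w z|) ∧
    ∀ a ∈ idx2 d, ∀ x : Vd d,
      (∫ y, |RaV d a w x y|) ≤ ∫ z, |mpow d a z * w z| := by
  refine ⟨fun ψ φ => ?_, abs_integral_le_integral_abs, fun a ha x => ?_⟩
  · have hx (x : Vd d) : ∫ y, w (x - y) * ψ x * φ y = (∫ z, w z) * (ψ x * φ x)
        + ∑ a ∈ idx2 d, cf a * (ψ x * ∫ y, (∫ τ, ker d (fun z => mpow d a z * w z) x τ y ∂mu)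
          * foldS (List.finRange d) a φ y) := by
      have h1 : ∫ y, w (x - y) * ψ x * φ y = ψ x * ∫ y, w (x - y) * φ y := by
        rw [← integral_const_mul]
        congr 1
        funext y
        ring
      rw [h1, pointwise_decomp hcont hint heven hmom, mul_add, Finset.mul_sum]
      congr 1
      · ring
      · exact Finset.sum_congr rfl fun a _ => by ring
    have hψφ : Integrable fun x => ψ x * φ x :=
      ψ.integrable.mul_bdd (c := SchwartzMap.seminorm ℝ 0 0 φ)
        φ.continuous.aestronglyMeasurable
        (.of_forall fun q => SchwartzMap.norm_le_seminorm ℝ φ _)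
    have hR (a : Fin d → ℕ) (ha : a ∈ idx2 d) :=
      (integrable_ker_pairing (h := fun z => mpow d a z * w z) ((continuous_mpow a).mul hcont)
        (integrable_mpow_mul hcont hmom ha) (foldS (List.finRange d) a φ) ψ).const_mul (cf a)
    simp only [hx]
    rw [integral_add (hψφ.const_mul _) (integrable_finsetSum _ hR), integral_finsetSum _ hR,
      integral_const_mul]
    congr 1
    refine Finset.sum_congr rfl fun a ha => ?_
    congr 1
    funext x
    rw [← integral_const_mul, ← integral_const_mul]
    congr 1
    funext y
    rw [RaV_eq ha, coe_foldS, mderiv]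
    ring
  · have hc : Continuous fun z => mpow d a z * w z := (continuous_mpow a).mul hcont
    have hi := integrable_mpow_mul hcont hmom ha
    obtain ⟨h0, h2⟩ := cf_bounds ha
    have hk := integral_abs_ker_le hc hi x
    have hn : 0 ≤ ∫ z, |mpow d a z * w z| := integral_nonneg fun _ => abs_nonneg _
    simp only [RaV_eq ha, abs_mul (cf a), abs_of_nonneg h0, integral_const_mul]
    nlinarith [mul_le_mul_of_nonneg_left hk h0]
end
end
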